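/- arXiv:2509.02162 — 3 statements merged into one kernel-verified Lean document; each statement's English description precedes it below -/
import Mathlib

section
/- Let n ≥ 2, let H = u⊥ + t₀u (u a unit vector, t₀ ∈ ℝ) be a hyperplane in ℝⁿ, and let 0 < b < 1. Let ∂ ∈ 𝒥_H(𝒦ⁿₙ) be a map whose associated contraction is φ_∂(t) = b(t − t₀) + t₀ (the Brock set map with parameter b). Then ∂ cannot be weakly approximated on 𝒦ⁿₙ by finite compositions of polarizations with respect to hyperplanes parallel to H; that is, it is not the case that for every K ∈ 𝒦ⁿₙ there exist finite compositions ∂_{K,k} of polarizations with respect to hyperplanes parallel to H such that ‖1_{∂_{K,k} K} − 1_{∂K}‖_{L¹} → 0 as k → ∞. -/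
open MeasureTheory Metric Filter Topology
open scoped RealInnerProductSpace

noncomputable section

abbrev Euc (n : ℕ) : Type := EuclideanSpace ℝ (Fin n)

/-- `A` is essentially contained in `B` (up to a set of measure zero). -/
def essSub {n : ℕ} (A B : Set (Euc n)) : Prop := volume (A \ B) = 0

/-- `A` is essentially equal to `B` (up to a set of measure zero). -/
def essEq {n : ℕ} (A B : Set (Euc n)) : Prop := volume ((A \ B) ∪ (B \ A)) = 0

/-- The symmetric difference of two sets. -/
def sd {n : ℕ} (A B : Set (Euc n)) : Set (Euc n) := (A \ B) ∪ (B \ A)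

/-- A convex body: a compact convex set with nonempty interior. -/
def isConvexBody {n : ℕ} (A : Set (Euc n)) : Prop :=
  IsCompact A ∧ Convex ℝ A ∧ (interior A).Nonempty

/-- The infinite spherical cylinder of radius `ρ` whose axis passes through `c`
in direction `u`. -/
def cyl {n : ℕ} (u c : Euc n) (ρ : ℝ) : Set (Euc n) :=
  {y | ‖(y - c) - ⟪y - c, u⟫ • u‖ ≤ ρ}

/-- Membership in `𝒥_H(𝒦ⁿₙ)`: a map on convex bodies, with values in `𝓛ⁿ`, that is
monotonic, measure preserving, maps balls to balls, and respects `H`-cylinders,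
where `H` is a hyperplane with unit normal `u`. -/
def inJH {n : ℕ} (u : Euc n) (D : Set (Euc n) → Set (Euc n)) : Prop :=
  (∀ A : Set (Euc n), isConvexBody A → MeasurableSet (D A) ∧ volume (D A) ≠ ⊤) ∧
  (∀ A B : Set (Euc n), isConvexBody A → isConvexBody B →
      essSub A B → essSub (D A) (D B)) ∧
  (∀ A : Set (Euc n), isConvexBody A → volume (D A) = volume A) ∧
  (∀ A : Set (Euc n), isConvexBody A →
      (∃ (x : Euc n) (r : ℝ), 0 < r ∧ essEq A (closedBall x r)) →
      ∃ (x' : Euc n) (r' : ℝ), 0 < r' ∧ essEq (D A) (closedBall x' r')) ∧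
  (∀ A : Set (Euc n), isConvexBody A → ∀ (c : Euc n) (ρ : ℝ), 0 < ρ →
      essSub A (cyl u c ρ) → essSub (D A) (cyl u c ρ))

/-- `φ` is the contraction associated with `D` (with respect to the direction `u`):
`∂B(x + tu, r) = B(x + φ(t)u, r)`, essentially. -/
def assocContr {n : ℕ} (u : Euc n) (D : Set (Euc n) → Set (Euc n)) (φ : ℝ → ℝ) : Prop :=
  LipschitzWith 1 φ ∧ ∀ x : Euc n, ⟪x, u⟫ = 0 → ∀ t r : ℝ, 0 < r →
    essEq (D (closedBall (x + t • u) r)) (closedBall (x + φ t • u) r)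

/-- Convergence `∂_k → ∂` on the convex bodies, in the `L¹` sense of indicator functions. -/
def convOnK {n : ℕ} (Dk : ℕ → Set (Euc n) → Set (Euc n))
    (D : Set (Euc n) → Set (Euc n)) : Prop :=
  ∀ K : Set (Euc n), isConvexBody K →
    Tendsto (fun k => volume (sd (Dk k K) (D K))) atTop (𝓝 0)

/-- The polarization of `A` with respect to the oriented hyperplane `{x : ⟪x,v⟫ = c}` whose
positive closed halfspace is `{x : ⟪x,v⟫ ≥ c}`:
`(P_G A) ∩ G⁺ = (A ∪ A†) ∩ G⁺` and `(P_G A) ∩ G⁻ = (A ∩ A†) ∩ G⁻`,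
where `†` denotes reflection in the hyperplane. -/
def polzn {n : ℕ} (v : Euc n) (c : ℝ) (A : Set (Euc n)) : Set (Euc n) :=
  {x | c ≤ ⟪x, v⟫ ∧ (x ∈ A ∨ x - (2 * (⟪x, v⟫ - c)) • v ∈ A)} ∪
  {x | ⟪x, v⟫ ≤ c ∧ x ∈ A ∧ x - (2 * (⟪x, v⟫ - c)) • v ∈ A}

/-- `D` is a finite composition of polarizations with respect to hyperplanes parallel to
the hyperplane with unit normal `u` (with either orientation). -/
def isPolCompParallel {n : ℕ} (u : Euc n) (D : Set (Euc n) → Set (Euc n)) : Prop :=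
  ∃ l : List (Euc n × ℝ), l ≠ [] ∧ (∀ p ∈ l, p.1 = u ∨ p.1 = -u) ∧
    D = (l.map fun p => polzn p.1 p.2).foldr (· ∘ ·) id

/-!
A polarization in a hyperplane orthogonal to `u` moves the tube around a graph
`⟪y, u⟫ = f ⟪y, w⟫`, `w ⟂ u`, into the tube around the graph of `f` folded at one level. Composing
the identity with such folds of the line gives functions that, on every interval, map some
subinterval isometrically onto their whole image. This property survives uniform limits, and if
`∂` is weakly approximable, then applying the approximants to a thickened segment in the plane of
`u` and `w` exhibits `φ_∂` as such a limit. A strict contraction with the property is constant.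
-/

open Set

/-- A folding of the line: a 1-Lipschitz function which on every interval `[a, b]` attains its
whole image between two points `p`, `q` of `[a, b]` whose distance it preserves. Finite compositions
of reflections and of one-sided reflections `t ↦ c + |t - c|` have this property. -/
def IsFold (f : ℝ → ℝ) : Prop :=
  LipschitzWith 1 f ∧ ∀ a b, ∃ p ∈ uIcc a b, ∃ q ∈ uIcc a b,
    dist (f p) (f q) = dist p q ∧ MapsTo f (uIcc a b) (uIcc (f p) (f q))

section Fold

variable {f g : ℝ → ℝ}

theorem dist_map_eq_of_mem_uIcc {α : Type*} [PseudoMetricSpace α] {f : ℝ → α}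
    (hf : LipschitzWith 1 f) {p q x y : ℝ} (hpq : dist (f p) (f q) = dist p q)
    (hx : x ∈ uIcc p q) (hy : y ∈ uIcc p q) : dist (f x) (f y) = dist x y := by
  wlog hle : p ≤ q generalizing p q
  · exact this (by rwa [dist_comm, dist_comm q]) (by rwa [uIcc_comm]) (by rwa [uIcc_comm])
      (le_of_not_ge hle)
  wlog hxy : x ≤ y generalizing x y
  · rw [dist_comm, dist_comm x]
    exact this hy hx (le_of_not_ge hxy)
  rw [uIcc_of_le hle] at hx hy
  have nonexpansive (s t : ℝ) : dist (f s) (f t) ≤ dist s t := by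
    simpa only [NNReal.coe_one, one_mul] using hf.dist_le_mul s t
  have dist_split : dist p q = dist p x + dist x y + dist y q := by
    simp only [Real.dist_eq, abs_of_nonpos (sub_nonpos.2 hle), abs_of_nonpos (sub_nonpos.2 hxy),
      abs_of_nonpos (sub_nonpos.2 hx.1), abs_of_nonpos (sub_nonpos.2 hy.2)]
    ring
  linarith [dist_triangle4 (f p) (f x) (f y) (f q), nonexpansive p x, nonexpansive x y,
    nonexpansive y q]

theorem IsFold.comp (hg : IsFold g) (hf : IsFold f) : IsFold (g ∘ f) := by
  refine ⟨by simpa using hg.1.comp hf.1, fun a b => ?_⟩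
  obtain ⟨p, hp, q, hq, hpq, hfI⟩ := hf.2 a b
  obtain ⟨_, hα, _, hβ, hαβ, hgI⟩ := hg.2 (f p) (f q)
  have ivt := intermediate_value_uIcc (a := p) (b := q) hf.1.continuous.continuousOn
  obtain ⟨p', hp', rfl⟩ := ivt hα
  obtain ⟨q', hq', rfl⟩ := ivt hβ
  have hsub : uIcc p q ⊆ uIcc a b := uIcc_subset_uIcc hp hq
  exact ⟨p', hsub hp', q', hsub hq', hαβ.trans (dist_map_eq_of_mem_uIcc hf.1 hpq hp' hq'),
    hgI.comp hfI⟩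

theorem isFold_of_isometry (hf : Isometry f) : IsFold f := by
  refine ⟨hf.lipschitz, fun a b => ⟨a, left_mem_uIcc, b, right_mem_uIcc, hf.dist_eq a b, ?_⟩⟩
  intro x hx
  have ha : |f x - f a| ≤ |f b - f a| := by
    simpa only [← Real.dist_eq, hf.dist_eq] using abs_sub_left_of_mem_uIcc hx
  have hb : |f b - f x| ≤ |f b - f a| := by
    simpa only [← Real.dist_eq, hf.dist_eq] using abs_sub_right_of_mem_uIcc hx
  rw [mem_uIcc]
  grind

theorem isFold_neg : IsFold Neg.neg :=
  isFold_of_isometry (IsometryEquiv.neg ℝ).isometry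

theorem isFold_abs : IsFold abs := by
  refine ⟨lipschitzWith_one_norm, fun a b => ?_⟩
  by_cases h0 : 0 ∈ uIcc a b
  · -- The interval is folded at `0`: the endpoint farther from `0` gives the whole image.
    rcases le_total |a| |b| with hab | hab
    · refine ⟨0, h0, b, right_mem_uIcc, by simp [Real.dist_eq], fun x hx => ?_⟩
      simp only [mem_uIcc] at *
      grind
    · refine ⟨0, h0, a, left_mem_uIcc, by simp [Real.dist_eq], fun x hx => ?_⟩
      simp only [mem_uIcc] at *
      grind
  · refine ⟨a, left_mem_uIcc, b, right_mem_uIcc, ?_, fun x hx => ?_⟩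
    · simp only [mem_uIcc, Real.dist_eq] at *
      grind
    · simp only [mem_uIcc] at *
      grind

/-- The fold of the line at `c` onto `[c, ∞)`: the effect of a polarization on the heights of
centres of intervals. -/
def foldAbove (c t : ℝ) : ℝ := c + |t - c|

theorem isFold_foldAbove (c : ℝ) : IsFold (foldAbove c) :=
  (isFold_of_isometry (isometry_add_left c)).comp
    (isFold_abs.comp (isFold_of_isometry (IsometryEquiv.subRight c).isometry))

theorem abs_sub_foldAbove_le {c t p r : ℝ}
    (h : c ≤ t ∧ (|t - p| ≤ r ∨ |2 * c - t - p| ≤ r) ∨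
      t ≤ c ∧ |t - p| ≤ r ∧ |2 * c - t - p| ≤ r) :
    |t - foldAbove c p| ≤ r := by
  unfold foldAbove
  grind

theorem exists_dist_eq_mapsTo_uIcc_of_tendstoUniformlyOn {F : ℕ → ℝ → ℝ} {a b : ℝ}
    (hF : ∀ k, IsFold (F k)) (hf : ContinuousOn f (uIcc a b))
    (hlim : TendstoUniformlyOn F f atTop (uIcc a b)) :
    ∃ p ∈ uIcc a b, ∃ q ∈ uIcc a b,
      dist (f p) (f q) = dist p q ∧ MapsTo f (uIcc a b) (uIcc (f p) (f q)) := by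
  choose p hp q hq hpq hmaps using fun k => (hF k).2 a b
  obtain ⟨⟨p₀, q₀⟩, ⟨hp₀, hq₀⟩, σ, hσ, hpqσ⟩ :=
    (isCompact_uIcc.prod isCompact_uIcc).tendsto_subseq fun k => mk_mem_prod (hp k) (hq k)
  obtain ⟨hpσ, hqσ⟩ := Prod.tendsto_iff _ _ |>.1 hpqσ
  have tendsto_eval {x : ℕ → ℝ} {x₀ : ℝ} (hx : ∀ k, x k ∈ uIcc a b) (hx₀ : x₀ ∈ uIcc a b)
      (hxlim : Tendsto x atTop (𝓝 x₀)) : Tendsto (fun k => F (σ k) (x k)) atTop (𝓝 (f x₀)) :=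
    TendstoUniformlyOn.tendsto_comp (fun v hv => hσ.tendsto_atTop.eventually (hlim v hv))
      (hf x₀ hx₀) (tendsto_nhdsWithin_iff.2 ⟨hxlim, .of_forall hx⟩)
  have hFp := tendsto_eval (fun k => hp (σ k)) hp₀ hpσ
  have hFq := tendsto_eval (fun k => hq (σ k)) hq₀ hqσ
  refine ⟨p₀, hp₀, q₀, hq₀, ?_, fun x hx => ?_⟩
  · exact tendsto_nhds_unique (hFp.dist hFq) ((hpσ.dist hqσ).congr fun k => (hpq (σ k)).symm)
  · have hFx := tendsto_eval (fun _ => hx) hx tendsto_const_nhds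
    exact ⟨le_of_tendsto_of_tendsto' (hFp.min hFq) hFx fun k => (hmaps (σ k) hx).1,
      le_of_tendsto_of_tendsto' hFx (hFp.max hFq) fun k => (hmaps (σ k) hx).2⟩

theorem isFold_of_forall_exists_dist_lt (hf : LipschitzWith 1 f)
    (h : ∀ a b ε : ℝ, 0 < ε → ∃ g, IsFold g ∧ ∀ s ∈ uIcc a b, dist (f s) (g s) < ε) :
    IsFold f := by
  refine ⟨hf, fun a b => ?_⟩
  choose F hF hFf using fun k : ℕ => h a b (1 / (k + 1)) Nat.one_div_pos_of_nat
  refine exists_dist_eq_mapsTo_uIcc_of_tendstoUniformlyOn hF hf.continuous.continuousOn ?_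
  refine tendstoUniformlyOn_iff.2 fun ε hε => ?_
  filter_upwards [tendsto_one_div_add_atTop_nhds_zero_nat.eventually_lt_const hε] with k hk s hs
  exact (hFf k s hs).trans hk

theorem not_isFold_affine {b : ℝ} (hb0 : b ≠ 0) (hb1 : |b| ≠ 1) (t₀ d : ℝ) :
    ¬ IsFold fun t => b * (t - t₀) + d := by
  rintro ⟨-, hfold⟩
  obtain ⟨p, -, q, -, hpq, hmaps⟩ := hfold 0 1
  have hscale : |b| * |p - q| = |p - q| := by
    rw [← abs_mul]
    simpa only [Real.dist_eq, add_sub_add_right_eq_sub, ← mul_sub, sub_sub_sub_cancel_right]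
      using hpq
  obtain rfl : p = q := by
    by_contra hne
    exact hb1 (mul_eq_right₀ (abs_ne_zero.2 (sub_ne_zero.2 hne)) |>.1 hscale)
  simp only [uIcc_self] at hmaps
  have h01 : b * (0 - t₀) + d = b * (1 - t₀) + d :=
    (hmaps left_mem_uIcc).trans (hmaps right_mem_uIcc).symm
  exact hb0 (by linarith)

end Fold

section Tube

variable {n : ℕ} {u w : Euc n}

/-- The points whose height in direction `u` differs by at most `r` from that of the graph of `f`,
read as a function of the coordinate along `w`. -/
def graphTube (u w : Euc n) (f : ℝ → ℝ) (r : ℝ) : Set (Euc n) :=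
  {y | |⟪y, u⟫ - f ⟪y, w⟫| ≤ r}

theorem graphTube_neg_left (u w : Euc n) (f : ℝ → ℝ) (r : ℝ) :
    graphTube (-u) w f r = graphTube u w (Neg.neg ∘ f) r := by
  ext y
  simp only [graphTube, mem_ofPred_eq, inner_neg_right, Function.comp_apply]
  rw [← abs_neg]
  ring_nf

theorem polzn_mono (v : Euc n) (c : ℝ) {A B : Set (Euc n)} (h : A ⊆ B) :
    polzn v c A ⊆ polzn v c B := by
  rintro x (⟨hc, hx | hx⟩ | ⟨hc, hx, hx'⟩)
  · exact Or.inl ⟨hc, Or.inl (h hx)⟩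
  · exact Or.inl ⟨hc, Or.inr (h hx)⟩
  · exact Or.inr ⟨hc, h hx, h hx'⟩

theorem polzn_graphTube_subset (hu : ‖u‖ = 1) (hwu : ⟪w, u⟫ = 0) (c : ℝ) (f : ℝ → ℝ) (r : ℝ) :
    polzn u c (graphTube u w f r) ⊆ graphTube u w (foldAbove c ∘ f) r := by
  intro x hx
  have reflect_mem : x - (2 * (⟪x, u⟫ - c)) • u ∈ graphTube u w f r ↔
      |2 * c - ⟪x, u⟫ - f ⟪x, w⟫| ≤ r := by
    have height : ⟪x - (2 * (⟪x, u⟫ - c)) • u, u⟫ = 2 * c - ⟪x, u⟫ := by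
      rw [inner_sub_left, real_inner_smul_left, real_inner_self_eq_norm_sq, hu]
      ring
    have base : ⟪x - (2 * (⟪x, u⟫ - c)) • u, w⟫ = ⟪x, w⟫ := by
      rw [inner_sub_left, real_inner_smul_left, real_inner_comm w u, hwu, mul_zero, sub_zero]
    rw [graphTube, mem_ofPred_eq, height, base]
  simp only [polzn, mem_union, mem_ofPred_eq, reflect_mem] at hx
  exact abs_sub_foldAbove_le hx

theorem exists_isFold_polzn_graphTube_subset (hu : ‖u‖ = 1) (hwu : ⟪w, u⟫ = 0) {v : Euc n}
    (hv : v = u ∨ v = -u) (c : ℝ) :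
    ∃ g, IsFold g ∧ ∀ f r, polzn v c (graphTube u w f r) ⊆ graphTube u w (g ∘ f) r := by
  rcases hv with rfl | rfl
  · exact ⟨foldAbove c, isFold_foldAbove c, polzn_graphTube_subset hu hwu c⟩
  · refine ⟨Neg.neg ∘ foldAbove c ∘ Neg.neg,
      isFold_neg.comp ((isFold_foldAbove c).comp isFold_neg), fun f r => ?_⟩
    have h := polzn_graphTube_subset (u := -u) (w := w) (by rwa [norm_neg])
      (by rw [inner_neg_right, hwu, neg_zero]) c (Neg.neg ∘ f) r
    simpa only [graphTube_neg_left, ← Function.comp_assoc, neg_comp_neg, Function.id_comp] using h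

theorem isPolCompParallel.exists_isFold_subset_graphTube {S : Set (Euc n) → Set (Euc n)}
    (hS : isPolCompParallel u S) (hu : ‖u‖ = 1) (hwu : ⟪w, u⟫ = 0) :
    ∃ g, IsFold g ∧ ∀ A f r, A ⊆ graphTube u w f r → S A ⊆ graphTube u w (g ∘ f) r := by
  obtain ⟨l, -, hl, rfl⟩ := hS
  induction l with
  | nil => exact ⟨id, isFold_of_isometry isometry_id, fun _ _ _ hA => hA⟩
  | cons p l ih =>
    obtain ⟨g, hg, hgA⟩ := ih fun q hq => hl q (List.mem_cons_of_mem _ hq)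
    obtain ⟨g', hg', hgp⟩ :=
      exists_isFold_polzn_graphTube_subset hu hwu (hl p List.mem_cons_self) p.2
    exact ⟨g' ∘ g, hg'.comp hg, fun A f r hA => (polzn_mono _ _ (hgA A f r hA)).trans (hgp _ r)⟩

theorem abs_inner_sub_le_of_mem_closedBall (hu : ‖u‖ = 1) (hw : ‖w‖ = 1) (hwu : ⟪w, u⟫ = 0)
    {y : Euc n} {s t r : ℝ} (hy : y ∈ closedBall (s • w + t • u) r) :
    |⟪y, w⟫ - s| ≤ r ∧ |⟪y, u⟫ - t| ≤ r := by
  have bound {v : Euc n} (hv : ‖v‖ = 1) : |⟪y - (s • w + t • u), v⟫| ≤ r := by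
    have h := abs_real_inner_le_norm (y - (s • w + t • u)) v
    rw [hv, mul_one] at h
    exact h.trans (mem_closedBall_iff_norm.1 hy)
  have huw : ⟪u, w⟫ = 0 := by rwa [real_inner_comm]
  constructor
  · simpa [inner_sub_left, inner_add_left, real_inner_smul_left, huw, hw] using bound hw
  · simpa [inner_sub_left, inner_add_left, real_inner_smul_left, hwu, hu] using bound hu

variable {f : ℝ → ℝ} {s t r : ℝ}

theorem closedBall_subset_graphTube (hu : ‖u‖ = 1) (hw : ‖w‖ = 1) (hwu : ⟪w, u⟫ = 0)
    (hf : LipschitzWith 1 f) : closedBall (s • w + f s • u) r ⊆ graphTube u w f (2 * r) := by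
  intro y hy
  obtain ⟨hyw, hyu⟩ := abs_inner_sub_le_of_mem_closedBall hu hw hwu hy
  have hfy : |f s - f ⟪y, w⟫| ≤ |⟪y, w⟫ - s| := by
    simpa [Real.dist_eq, abs_sub_comm s] using hf.dist_le_mul s ⟪y, w⟫
  calc |⟪y, u⟫ - f ⟪y, w⟫| ≤ |⟪y, u⟫ - f s| + |f s - f ⟪y, w⟫| := abs_sub_le _ _ _
    _ ≤ 2 * r := by linarith

theorem dist_le_of_mem_closedBall_of_mem_graphTube (hu : ‖u‖ = 1) (hw : ‖w‖ = 1)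
    (hwu : ⟪w, u⟫ = 0) (hf : LipschitzWith 1 f) {ρ : ℝ} {y : Euc n}
    (hy : y ∈ closedBall (s • w + t • u) r) (hyf : y ∈ graphTube u w f ρ) :
    dist t (f s) ≤ 2 * r + ρ := by
  obtain ⟨hyw, hyu⟩ := abs_inner_sub_le_of_mem_closedBall hu hw hwu hy
  have hfy : dist (f ⟪y, w⟫) (f s) ≤ |⟪y, w⟫ - s| := by
    simpa [Real.dist_eq] using hf.dist_le_mul ⟪y, w⟫ s
  have hyf' : dist ⟪y, u⟫ (f ⟪y, w⟫) ≤ ρ := hyf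
  rw [← Real.dist_eq, dist_comm] at hyu
  linarith [dist_triangle4 t ⟪y, u⟫ (f ⟪y, w⟫) (f s)]

end Tube

section Approximation

variable {n : ℕ}

theorem essSub_of_subset {A B : Set (Euc n)} (h : A ⊆ B) : essSub A B := by
  rw [essSub, sdiff_eq_empty.2 h, measure_empty]

theorem essSub.trans {A B C : Set (Euc n)} (hAB : essSub A B) (hBC : essSub B C) : essSub A C :=
  ae_le_set.1 ((ae_le_set.2 hAB).trans (ae_le_set.2 hBC))

theorem essEq.essSub_symm {A B : Set (Euc n)} (h : essEq A B) : essSub B A :=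
  measure_mono_null subset_union_right h

theorem essSub.inter_nonempty {A B T : Set (Euc n)} (hAB : essSub A B)
    (hT : volume (sd T B) < volume A) : (A ∩ T).Nonempty := by
  by_contra hempty
  have hAT : Disjoint A T := disjoint_iff_inter_eq_empty.2 (not_nonempty_iff_eq_empty.1 hempty)
  have hcover : A ⊆ A \ B ∪ sd T B := fun y hy =>
    (em (y ∈ B)).elim (fun hyB => Or.inr (Or.inr ⟨hyB, hAT.notMem_of_mem_left hy⟩))
      fun hyB => Or.inl ⟨hy, hyB⟩
  refine hT.not_ge ?_
  calc volume A ≤ volume (A \ B) + volume (sd T B) := (measure_mono hcover).trans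
        (measure_union_le _ _)
    _ = volume (sd T B) := by rw [show volume (A \ B) = 0 from hAB, zero_add]

theorem isConvexBody_closedBall (x : Euc n) {r : ℝ} (hr : 0 < r) :
    isConvexBody (closedBall x r) :=
  ⟨isCompact_closedBall x r, convex_closedBall x r, by
    simpa [interior_closedBall x hr.ne'] using hr⟩

theorem isConvexBody_cthickening {A : Set (Euc n)} (hA : IsCompact A) (hconv : Convex ℝ A)
    (hne : A.Nonempty) {r : ℝ} (hr : 0 < r) : isConvexBody (cthickening r A) :=
  ⟨hA.cthickening, hconv.cthickening r, (hne.mono (self_subset_thickening hr A)).mono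
    (interior_maximal (thickening_subset_cthickening r A) isOpen_thickening)⟩

theorem exists_isConvexBody_subset_graphTube {u w : Euc n} (hu : ‖u‖ = 1) (hw : ‖w‖ = 1)
    (hwu : ⟪w, u⟫ = 0) (a b : ℝ) {r : ℝ} (hr : 0 < r) :
    ∃ K, isConvexBody K ∧ (∀ s ∈ uIcc a b, closedBall (s • w + s • u) r ⊆ K) ∧
      K ⊆ graphTube u w id (2 * r) := by
  let A : Set (Euc n) := (fun s : ℝ => s • (w + u)) '' uIcc a b
  have hA : IsCompact A := isCompact_uIcc.image (by fun_prop)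
  have hconv : Convex ℝ A :=
    (convex_uIcc a b).linear_image (LinearMap.toSpanSingleton ℝ (Euc n) (w + u))
  refine ⟨cthickening r A, isConvexBody_cthickening hA hconv (nonempty_uIcc.image _) hr,
    fun s hs => ?_, ?_⟩
  · have hsA : s • w + s • u ∈ A := ⟨s, hs, smul_add s w u⟩
    exact closedBall_subset_cthickening hsA r
  · rw [hA.cthickening_eq_biUnion_closedBall hr.le]
    refine iUnion₂_subset ?_
    rintro _ ⟨s, -, rfl⟩
    simpa only [smul_add, id_eq] using closedBall_subset_graphTube hu hw hwu LipschitzWith.id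

theorem exists_norm_eq_one_inner_eq_zero {𝕜 E : Type*} [RCLike 𝕜] [NormedAddCommGroup E]
    [InnerProductSpace 𝕜 E] (hE : 1 < Module.finrank 𝕜 E) (u : E) :
    ∃ w : E, ‖w‖ = 1 ∧ inner 𝕜 w u = 0 := by
  have hproper : Submodule.span 𝕜 {u} ≠ ⊤ := by
    intro htop
    have hle := finrank_span_le_card (R := 𝕜) ({u} : Set E)
    rw [htop, finrank_top, toFinset_singleton, Finset.card_singleton] at hle
    exact hle.not_gt hE
  obtain ⟨z, hz, hz0⟩ := Submodule.exists_mem_ne_zero_of_ne_bot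
    (mt Submodule.orthogonal_eq_bot_iff.1 hproper)
  refine ⟨(‖z‖⁻¹ : 𝕜) • z, norm_smul_inv_norm hz0, ?_⟩
  rw [inner_smul_left, Submodule.mem_orthogonal_singleton_iff_inner_left.1 hz, mul_zero]

/-- `D` can be weakly approximated on the convex bodies by finite compositions of polarizations
with respect to hyperplanes with normal `u`; the approximating sequence may depend on the body. -/
def IsWeaklyApproximable (u : Euc n) (D : Set (Euc n) → Set (Euc n)) : Prop :=
  ∀ K : Set (Euc n), isConvexBody K →
    ∃ S : ℕ → Set (Euc n) → Set (Euc n),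
      (∀ k, isPolCompParallel u (S k)) ∧
      Tendsto (fun k => volume (sd (S k K) (D K))) atTop (𝓝 0)

theorem IsWeaklyApproximable.exists_isFold_dist_lt {u w : Euc n} {D : Set (Euc n) → Set (Euc n)}
    {φ : ℝ → ℝ} (hD : IsWeaklyApproximable u D) (hu : ‖u‖ = 1) (hw : ‖w‖ = 1) (hwu : ⟪w, u⟫ = 0)
    (hmono : ∀ A B, isConvexBody A → isConvexBody B → essSub A B → essSub (D A) (D B))
    (hφ : assocContr u D φ) (a b ε : ℝ) (hε : 0 < ε) :
    ∃ g, IsFold g ∧ ∀ s ∈ uIcc a b, dist (φ s) (g s) < ε := by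
  obtain ⟨r, hr, hrε⟩ : ∃ r : ℝ, 0 < r ∧ 2 * r + 2 * r < ε := ⟨ε / 8, by linarith, by linarith⟩
  obtain ⟨K, hK, hballs, htube⟩ := exists_isConvexBody_subset_graphTube hu hw hwu a b hr
  obtain ⟨S, hS, hlim⟩ := hD K hK
  obtain ⟨k, hk⟩ :=
    (hlim.eventually_lt_const (measure_closedBall_pos volume (0 : Euc n) hr)).exists
  obtain ⟨g, hg, hgS⟩ := (hS k).exists_isFold_subset_graphTube hu hwu
  refine ⟨g, hg, fun s hs => ?_⟩
  have hball : essSub (closedBall (s • w + φ s • u) r) (D K) :=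
    (hφ.2 (s • w) (by rw [real_inner_smul_left, hwu, mul_zero]) s r hr).essSub_symm.trans
      (hmono _ K (isConvexBody_closedBall _ hr) hK (essSub_of_subset (hballs s hs)))
  obtain ⟨y, hyball, hyS⟩ := hball.inter_nonempty (by rwa [Measure.addHaar_closedBall_center])
  exact (dist_le_of_mem_closedBall_of_mem_graphTube hu hw hwu hg.1 hyball
    (hgS K id (2 * r) htube hyS)).trans_lt hrε

end Approximation

theorem stmt10_general {n : ℕ} (hn : 2 ≤ n) {u : Euc n} (hu : ‖u‖ = 1)
    {D : Set (Euc n) → Set (Euc n)}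
    (hmono : ∀ A B, isConvexBody A → isConvexBody B → essSub A B → essSub (D A) (D B))
    {φ : ℝ → ℝ} (hφ : assocContr u D φ) (hD : IsWeaklyApproximable u D) : IsFold φ := by
  obtain ⟨w, hw, hwu⟩ := exists_norm_eq_one_inner_eq_zero (𝕜 := ℝ)
    (by rwa [finrank_euclideanSpace_fin]) u
  exact isFold_of_forall_exists_dist_lt hφ.1 (hD.exists_isFold_dist_lt hu hw hwu hmono hφ)

/-- Corollary 6.9: the Brock set map with parameter `0 < b < 1` on the convex bodies,
i.e. a map in `𝒥_H(𝒦ⁿₙ)` whose associated contraction is `t ↦ b(t − t₀) + t₀`, cannot be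
weakly approximated on the convex bodies by finite compositions of polarizations with
respect to hyperplanes parallel to `H = u⊥ + t₀u`. -/
theorem stmt10 {n : ℕ} (hn : 2 ≤ n) (u : Euc n) (hu : ‖u‖ = 1) (t₀ : ℝ)
    (b : ℝ) (hb0 : 0 < b) (hb1 : b < 1)
    (D : Set (Euc n) → Set (Euc n)) (hD : inJH u D)
    (hφ : assocContr u D (fun t => b * (t - t₀) + t₀)) :
    ¬ ∀ K : Set (Euc n), isConvexBody K →
        ∃ S : ℕ → Set (Euc n) → Set (Euc n),
          (∀ k, isPolCompParallel u (S k)) ∧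
          Tendsto (fun k => volume (sd (S k K) (D K))) atTop (𝓝 0) :=
  fun happrox => not_isFold_affine hb0.ne' (by rw [abs_of_pos hb0]; exact hb1.ne) t₀ t₀
    (stmt10_general hn hu hD.2.1 hφ happrox)
end
end

section
/- Let n ≥ 2 and let ψ : ℝⁿ → ℝⁿ be a contraction. Suppose there is a sequence of maps ψ_k = ψ_{k,m_k} ∘ ⋯ ∘ ψ_{k,1}, where each ψ_{k,i} is the contraction associated with a polarization (i.e., of the form x ↦ x + (|t − ⟨x,u⟩| + (t − ⟨x,u⟩))u for some unit vector u and t ∈ ℝ), such that ψ_k → ψ pointwise on the unit ball Bⁿ. If the restriction of ψ to Bⁿ is injective, then 𝓗ⁿ(ψ(Bⁿ)) = 𝓗ⁿ(Bⁿ) = κₙ. -/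
open MeasureTheory Metric Filter Topology
open scoped RealInnerProductSpace

noncomputable section

/-- The contraction associated with the polarization with respect to the oriented
hyperplane `{x : ⟪x,u⟫ = t}` with positive halfspace `{x : ⟪x,u⟫ ≥ t}`. -/
def polContr {n : ℕ} (u : Euc n) (t : ℝ) (x : Euc n) : Euc n :=
  x + (|t - ⟪x, u⟫| + (t - ⟪x, u⟫)) • u

/-!
By compactness, the approximants `ψ_k` are almost injective on the ball of radius `R` about `c` for
large `k`: points which `ψ_k` identifies are at distance less than `R - r`, where `r` is slightly
smaller than `R`. Such a composite of polarizations agrees with a global isometry on the ball of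
radius `r`. Indeed, suppose that the composite `Φ` of the first few polarizations does. The next
polarization remains isometric on the ball of radius `r` about `Φ c` unless the polarizing
hyperplane cuts that ball. A cut close to `Φ c` would identify two points at distance `R - r`. To
exclude the other cuts, consider the mod 2 degree of the polarized map on the large ball. It is
locally constant off the image of the boundary sphere, which almost injectivity keeps away from the
ball of radius `r` about the image of `c`; it is odd at the pole of this ball on the positive side,
hence on the whole ball. So the ball lies in the image of the polarized map, that is, in the
positive halfspace, which fails when the hyperplane cuts it.

Letting `k → ∞` and then `r → R`, the limit `ψ` is isometric on the ball and so preserves its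
Hausdorff measure.
-/

open Set

/-- Almost injectivity at scale `δ`: points of `s` with the same image are at distance less than
`δ`. On a compact set, this is what uniform approximation retains of injectivity. -/
def AlmostInjOn {X Y : Type*} [PseudoMetricSpace X] (δ : ℝ) (f : X → Y) (s : Set X) : Prop :=
  ∀ ⦃x⦄, x ∈ s → ∀ ⦃y⦄, y ∈ s → f x = f y → dist x y < δ

theorem AlmostInjOn.of_comp {X Y Z : Type*} [PseudoMetricSpace X] {δ : ℝ} {f : X → Y} {g : Y → Z}
    {s : Set X} (h : AlmostInjOn δ (g ∘ f) s) : AlmostInjOn δ f s :=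
  fun _ hx _ hy hxy => h hx hy (congrArg g hxy)

theorem tendsto_prod_nhds_of_equicontinuousAt {ι X Y : Type*} [TopologicalSpace X] [UniformSpace Y]
    {l : Filter ι} {F : ι → X → Y} {x : X} {y : Y} (hF : EquicontinuousAt F x)
    (hx : Tendsto (F · x) l (𝓝 y)) :
    Tendsto (fun p : ι × X => F p.1 p.2) (l ×ˢ 𝓝 x) (𝓝 y) := by
  refine (hx.comp tendsto_fst).congr_uniformity fun U hU => ?_
  exact (tendsto_snd.eventually (hF U hU)).mono fun p hp => hp p.1

theorem eventually_almostInjOn {ι X Y : Type*} [PseudoMetricSpace X] [UniformSpace Y] [T2Space Y]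
    {l : Filter ι} {F : ι → X → Y} {f : X → Y} {K : Set X} {δ : ℝ} (hF : Equicontinuous F)
    (hlim : ∀ x ∈ K, Tendsto (F · x) l (𝓝 (f x))) (hK : IsCompact K) (hf : InjOn f K)
    (hδ : 0 < δ) : ∀ᶠ i in l, AlmostInjOn δ (F i) K := by
  have hfar : IsCompact (K ×ˢ K ∩ {p | δ ≤ dist p.1 p.2}) :=
    (hK.prod hK).inter_right (isClosed_le continuous_const continuous_dist)
  have hsep : ∀ p ∈ K ×ˢ K ∩ {p | δ ≤ dist p.1 p.2},
      {q : ι × X × X | F q.1 q.2.1 ≠ F q.1 q.2.2} ∈ l ×ˢ 𝓝 p := by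
    rintro ⟨x, y⟩ ⟨⟨hx, hy⟩, hxy⟩
    have hne : f x ≠ f y := fun h => by
      have hle : δ ≤ dist x y := hxy
      have heq : x = y := hf hx hy h
      rw [heq, dist_self] at hle
      exact hδ.not_ge hle
    have hFx := (tendsto_prod_nhds_of_equicontinuousAt (hF x) (hlim x hx)).comp
      (tendsto_id.prodMap (tendsto_fst (f := 𝓝 x) (g := 𝓝 y)))
    have hFy := (tendsto_prod_nhds_of_equicontinuousAt (hF y) (hlim y hy)).comp
      (tendsto_id.prodMap (tendsto_snd (f := 𝓝 x) (g := 𝓝 y)))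
    rw [nhds_prod_eq]
    exact (hFx.prodMk_nhds hFy).eventually (isClosed_diagonal.isOpen_compl.mem_nhds hne)
  have huniform : ∀ᶠ q in l ×ˢ 𝓟 (K ×ˢ K ∩ {p | δ ≤ dist p.1 p.2}), F q.1 q.2.1 ≠ F q.1 q.2.2 :=
    prod_mono le_rfl principal_le_nhdsSet (hfar.mem_prod_nhdsSet_of_forall hsep)
  filter_upwards [eventually_prod_principal_iff.1 huniform] with i hi x hx y hy hxy
  exact not_le.1 fun hle => hi (x, y) ⟨⟨hx, hy⟩, hle⟩ hxy

theorem notMem_frontier_iff_eventually {X : Type*} [TopologicalSpace X] {s : Set X} {x : X} :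
    x ∉ frontier s ↔ ∀ᶠ y in 𝓝 x, (y ∈ s ↔ x ∈ s) := by
  by_cases hx : x ∈ s
  · simp only [hx, iff_true, ← mem_interior_iff_notMem_frontier hx, mem_interior_iff_mem_nhds]
    rfl
  · rw [← frontier_compl, ← mem_interior_iff_notMem_frontier (mem_compl hx)]
    simp only [hx, iff_false, mem_interior_iff_mem_nhds]
    rfl

theorem subset_of_isPreconnected_of_disjoint_frontier {X : Type*} [TopologicalSpace X]
    {s t : Set X} (hs : IsPreconnected s) (hst : (s ∩ t).Nonempty)
    (hdisj : Disjoint s (frontier t)) : s ⊆ t := by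
  obtain ⟨x, hxs, hxt⟩ := hst
  have hcover : s ⊆ interior t ∪ interior tᶜ := fun y hy => by
    have hy' := disjoint_left.1 hdisj hy
    by_cases hyt : y ∈ t
    · exact .inl ((mem_interior_iff_notMem_frontier hyt).2 hy')
    · exact .inr ((mem_interior_iff_notMem_frontier hyt).2 (by rwa [frontier_compl]))
  have hx : x ∈ interior t :=
    (mem_interior_iff_notMem_frontier hxt).2 (disjoint_left.1 hdisj hxs)
  have hopen : Disjoint (interior t) (interior tᶜ) :=
    disjoint_compl_right.mono interior_subset interior_subset
  exact (hs.subset_left_of_subset_union isOpen_interior isOpen_interior hopen hcover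
    ⟨x, hxs, hx⟩).trans interior_subset

/-! ### Polarizations -/

section Polarization

variable {E : Type*} [NormedAddCommGroup E] [InnerProductSpace ℝ E] {u : E} {t : ℝ}

/-- The reflection in the hyperplane `{x : ⟪x, u⟫ = t}`, for a unit vector `u`, as an isometry of
the whole space. -/
def hyperplaneReflection (u : E) (t : ℝ) : E ≃ᵢ E :=
  (ℝ ∙ u)ᗮ.reflection.toIsometryEquiv.trans (IsometryEquiv.addRight ((2 * t) • u))

theorem hyperplaneReflection_apply (hu : ‖u‖ = 1) (t : ℝ) (x : E) :
    hyperplaneReflection u t x = x + (2 * (t - ⟪x, u⟫)) • u := by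
  have hx : (ℝ ∙ u)ᗮ.reflection x = x - (2 * ⟪x, u⟫) • u := by
    rw [Submodule.reflection_orthogonal_apply, Submodule.reflection_singleton_apply, hu,
      real_inner_comm]
    simp only [RCLike.ofReal_real_eq_id, id_eq, one_pow, div_one]
    module
  change (ℝ ∙ u)ᗮ.reflection x + (2 * t) • u = _
  rw [hx]
  module

theorem inner_hyperplaneReflection (hu : ‖u‖ = 1) (t : ℝ) (x : E) :
    ⟪hyperplaneReflection u t x, u⟫ = 2 * t - ⟪x, u⟫ := by
  rw [hyperplaneReflection_apply hu, inner_add_left, real_inner_smul_left,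
    real_inner_self_eq_norm_sq, hu]
  ring

theorem hyperplaneReflection_involutive (hu : ‖u‖ = 1) (t : ℝ) :
    Function.Involutive (hyperplaneReflection u t) := fun x => by
  rw [hyperplaneReflection_apply hu, inner_hyperplaneReflection hu, hyperplaneReflection_apply hu]
  module

theorem dist_hyperplaneReflection_left (hu : ‖u‖ = 1) (t : ℝ) (x y : E) :
    dist (hyperplaneReflection u t x) y = dist x (hyperplaneReflection u t y) := by
  rw [← (hyperplaneReflection u t).dist_eq, hyperplaneReflection_involutive hu]

theorem hyperplaneReflection_eq_self (hu : ‖u‖ = 1) {x : E} (hx : ⟪x, u⟫ = t) :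
    hyperplaneReflection u t x = x := by
  rw [hyperplaneReflection_apply hu, hx, sub_self, mul_zero, zero_smul, add_zero]

/-- The contraction associated with the polarization with respect to the hyperplane
`{x : ⟪x, u⟫ = t}`, in any real inner product space; on `Euc n` it is `polContr`. -/
def polarizationMap (u : E) (t : ℝ) (x : E) : E :=
  x + (|t - ⟪x, u⟫| + (t - ⟪x, u⟫)) • u

theorem polarizationMap_of_le {x : E} (hx : t ≤ ⟪x, u⟫) : polarizationMap u t x = x := by
  rw [polarizationMap, abs_of_nonpos (sub_nonpos.2 hx), neg_add_cancel, zero_smul, add_zero]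

theorem polarizationMap_of_ge (hu : ‖u‖ = 1) {x : E} (hx : ⟪x, u⟫ ≤ t) :
    polarizationMap u t x = hyperplaneReflection u t x := by
  rw [polarizationMap, abs_of_nonneg (sub_nonneg.2 hx), hyperplaneReflection_apply hu, two_mul]

theorem inner_polarizationMap (hu : ‖u‖ = 1) (t : ℝ) (x : E) :
    ⟪polarizationMap u t x, u⟫ = t + |t - ⟪x, u⟫| := by
  rw [polarizationMap, inner_add_left, real_inner_smul_left, real_inner_self_eq_norm_sq, hu]
  ring

theorem polarizationMap_eq_iff (hu : ‖u‖ = 1) {x q : E} :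
    polarizationMap u t x = q ↔ t ≤ ⟪q, u⟫ ∧ (x = q ∨ x = hyperplaneReflection u t q) := by
  constructor
  · rintro rfl
    refine ⟨by rw [inner_polarizationMap hu]; exact le_add_of_nonneg_right (abs_nonneg _), ?_⟩
    rcases le_total t ⟪x, u⟫ with hx | hx
    · exact .inl (polarizationMap_of_le hx).symm
    · rw [polarizationMap_of_ge hu hx, hyperplaneReflection_involutive hu]
      exact .inr rfl
  · rintro ⟨hq, rfl | rfl⟩
    · exact polarizationMap_of_le hq
    · rw [polarizationMap_of_ge hu (by rw [inner_hyperplaneReflection hu]; linarith),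
        hyperplaneReflection_involutive hu]

theorem mem_image_polarizationMap_iff (hu : ‖u‖ = 1) {A : Set E} {q : E} :
    q ∈ polarizationMap u t '' A ↔
      t ≤ ⟪q, u⟫ ∧ (q ∈ A ∨ hyperplaneReflection u t q ∈ A) := by
  simp only [mem_image, polarizationMap_eq_iff hu]
  aesop

theorem lipschitzWith_polarizationMap (hu : ‖u‖ = 1) (t : ℝ) :
    LipschitzWith 1 (polarizationMap u t) := by
  refine LipschitzWith.of_dist_le_mul fun x y => ?_
  set α := |t - ⟪x, u⟫| - |t - ⟪y, u⟫|
  set β := ⟪x - y, u⟫ with hβ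
  have hαβ : α ^ 2 ≤ β ^ 2 := by
    refine sq_le_sq.2 ((abs_abs_sub_abs_le_abs_sub _ _).trans_eq ?_)
    rw [hβ, inner_sub_left, ← abs_neg]
    congr 1
    ring
  have hsub : polarizationMap u t x - polarizationMap u t y = (x - y) + (α - β) • u := by
    simp only [polarizationMap, α, β, inner_sub_left]
    module
  have hsq : ‖polarizationMap u t x - polarizationMap u t y‖ ^ 2 =
      ‖x - y‖ ^ 2 + (α ^ 2 - β ^ 2) := by
    rw [hsub, norm_add_sq_real, norm_smul, real_inner_smul_right, hu, mul_one, Real.norm_eq_abs,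
      sq_abs]
    ring
  rw [NNReal.coe_one, one_mul, dist_eq_norm, dist_eq_norm,
    ← sq_le_sq₀ (norm_nonneg _) (norm_nonneg _), hsq]
  linarith

/-- Finite compositions of contractions associated with polarizations. -/
inductive IsPolarizationComposite : (E → E) → Prop
  | id : IsPolarizationComposite id
  | comp {Φ : E → E} {u : E} (hΦ : IsPolarizationComposite Φ) (hu : ‖u‖ = 1) (t : ℝ) :
      IsPolarizationComposite (polarizationMap u t ∘ Φ)

theorem isPolarizationComposite_foldr {l : List (E → E)}
    (hl : ∀ f ∈ l, ∃ (u : E) (t : ℝ), ‖u‖ = 1 ∧ f = polarizationMap u t) :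
    IsPolarizationComposite (l.foldr (· ∘ ·) id) := by
  induction l with
  | nil => exact .id
  | cons f l ih =>
    obtain ⟨⟨u, t, hu, rfl⟩, htail⟩ := List.forall_mem_cons.1 hl
    exact (ih htail).comp hu t

theorem IsPolarizationComposite.lipschitzWith {Φ : E → E} (hΦ : IsPolarizationComposite Φ) :
    LipschitzWith 1 Φ := by
  induction hΦ with
  | id => exact .id
  | comp _ hu t ih => simpa only [mul_one] using (lipschitzWith_polarizationMap hu t).comp ih

variable {c o : E} {r R : ℝ}

theorem add_smul_mem_closedBall (hu : ‖u‖ = 1) {s : ℝ} (hs : |s| ≤ r) :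
    o + s • u ∈ closedBall o r := by
  rwa [mem_closedBall, dist_self_add_left, norm_smul, hu, mul_one, Real.norm_eq_abs]

theorem abs_inner_sub_inner_le_dist (hu : ‖u‖ = 1) (x y : E) :
    |⟪x, u⟫ - ⟪y, u⟫| ≤ dist x y := by
  simpa only [inner_sub_left, hu, mul_one, dist_eq_norm] using abs_real_inner_le_norm (x - y) u

theorem mem_image_polarizationMap_closedBall (hu : ‖u‖ = 1) {q : E}
    (hq : q ∈ closedBall (polarizationMap u t o) r) (hqt : t ≤ ⟪q, u⟫) :
    q ∈ polarizationMap u t '' closedBall o r := by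
  refine (mem_image_polarizationMap_iff hu).2 ⟨hqt, ?_⟩
  rcases le_total t ⟪o, u⟫ with ho | ho
  · rw [polarizationMap_of_le ho] at hq
    exact .inl hq
  · rw [polarizationMap_of_ge hu ho, mem_closedBall, ← dist_hyperplaneReflection_left hu] at hq
    exact .inr hq

theorem exists_polarizationMap_eq_of_abs_add_le (hu : ‖u‖ = 1) {s : ℝ} (hs : 0 ≤ s)
    (h : |t - ⟪o, u⟫| + s ≤ r) :
    ∃ p ∈ closedBall o r, ∃ q ∈ closedBall o r,
      polarizationMap u t p = polarizationMap u t q ∧ dist p q = 2 * s := by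
  set τ := t - ⟪o, u⟫ with hτ
  have huu : ⟪u, u⟫ = 1 := by rw [real_inner_self_eq_norm_sq, hu, one_pow]
  have hmem : ∀ σ : ℝ, |σ| = s → o + (τ + σ) • u ∈ closedBall o r := fun σ hσ =>
    add_smul_mem_closedBall hu ((abs_add_le _ _).trans (by rwa [hσ]))
  have hinner : ∀ σ : ℝ, ⟪o + (τ + σ) • u, u⟫ = t + σ := fun σ => by
    rw [inner_add_left, real_inner_smul_left, huu, hτ]
    ring
  refine ⟨_, hmem s (abs_of_nonneg hs), _, hmem (-s) (by rw [abs_neg, abs_of_nonneg hs]), ?_, ?_⟩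
  · rw [polarizationMap_of_le (by rw [hinner]; linarith),
      polarizationMap_of_ge hu (by rw [hinner]; linarith), hyperplaneReflection_apply hu, hinner]
    module
  · rw [dist_add_left, dist_eq_norm, ← sub_smul, norm_smul, hu, mul_one, Real.norm_eq_abs,
      abs_of_nonneg (by linarith)]
    ring

theorem le_abs_sub_inner_of_closedBall_subset (hu : ‖u‖ = 1) (hr : 0 ≤ r)
    (h : closedBall (polarizationMap u t o) r ⊆ {q | t ≤ ⟪q, u⟫}) : r ≤ |t - ⟪o, u⟫| := by
  have hlow : t ≤ ⟪polarizationMap u t o + (-r) • u, u⟫ :=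
    h (add_smul_mem_closedBall hu (by rw [abs_neg, abs_of_nonneg hr]))
  rw [inner_add_left, inner_polarizationMap hu, real_inner_smul_left, real_inner_self_eq_norm_sq,
    hu] at hlow
  linarith

theorem exists_isometryEquiv_eqOn_polarizationMap (hu : ‖u‖ = 1) (h : r ≤ |t - ⟪o, u⟫|) :
    ∃ e : E ≃ᵢ E, EqOn (polarizationMap u t) e (closedBall o r) := by
  have hside : ∀ x ∈ closedBall o r, |⟪x, u⟫ - ⟪o, u⟫| ≤ |t - ⟪o, u⟫| := fun x hx =>
    (abs_inner_sub_inner_le_dist hu x o).trans ((mem_closedBall.1 hx).trans h)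
  rcases le_total t ⟪o, u⟫ with ho | ho
  · refine ⟨.refl E, fun x hx => polarizationMap_of_le ?_⟩
    have := (abs_le.1 (hside x hx)).1
    rw [abs_of_nonpos (sub_nonpos.2 ho)] at this
    linarith
  · refine ⟨hyperplaneReflection u t, fun x hx => polarizationMap_of_ge hu ?_⟩
    have := (abs_le.1 (hside x hx)).2
    rw [abs_of_nonneg (sub_nonneg.2 ho)] at this
    linarith

/-! ### Folding a region of odd degree -/

/-- The mod 2 pushforward of `S` under `polarizationMap u t`: the points of the positive halfspace
one of whose two (possibly coinciding) preimages lies in `S` and the other does not. If `S` is the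
region where a map has odd degree, this is the region where its polarization has odd degree. -/
def oddFold (u : E) (t : ℝ) (S : Set E) : Set E :=
  {q | t ≤ ⟪q, u⟫ ∧ ¬(q ∈ S ↔ hyperplaneReflection u t q ∈ S)}

variable {S : Set E}

theorem oddFold_subset_image (hu : ‖u‖ = 1) : oddFold u t S ⊆ polarizationMap u t '' S :=
  fun _ ⟨hqt, hq⟩ => (mem_image_polarizationMap_iff hu).2 ⟨hqt, by tauto⟩

theorem frontier_oddFold_subset (hu : ‖u‖ = 1) :
    frontier (oddFold u t S) ⊆ polarizationMap u t '' frontier S := by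
  intro q hq
  have hhalf : IsClosed {p : E | t ≤ ⟪p, u⟫} := isClosed_le continuous_const (by fun_prop)
  have hqt : t ≤ ⟪q, u⟫ :=
    closure_minimal (fun _ hp => hp.1) hhalf (frontier_subset_closure hq)
  contrapose! hq
  rw [mem_image_polarizationMap_iff hu, not_and, not_or] at hq
  obtain ⟨hq₁, hq₂⟩ := hq hqt
  have hS := notMem_frontier_iff_eventually.1 hq₁
  have hσS := ((hyperplaneReflection u t).continuous.tendsto q).eventually
    (notMem_frontier_iff_eventually.1 hq₂)
  rw [notMem_frontier_iff_eventually]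
  rcases hqt.eq_or_lt with hqt' | hqt'
  · have hfix := hyperplaneReflection_eq_self hu hqt'.symm
    filter_upwards [hS, hσS] with p hp hσp
    simp only [oddFold, mem_ofPred_eq, hp, hσp, hfix, not_true_eq_false, and_false]
  · have hpos : ∀ᶠ p in 𝓝 q, t < ⟪p, u⟫ :=
      continuousAt_const.eventually_lt (by fun_prop) hqt'
    filter_upwards [hS, hσS, hpos] with p hp hσp hpt
    simp only [oddFold, mem_ofPred_eq, hp, hσp, hqt, hpt.le]

-- The pole of the ball on the positive side has exactly one preimage in `S`: its other preimage is
-- too far from `o`.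
theorem add_smul_mem_oddFold (hu : ‖u‖ = 1) (hr : 0 ≤ r) (hSr : closedBall o r ⊆ S)
    (hSR : S ⊆ closedBall o R) (h : R < 2 * |t - ⟪o, u⟫| + r) :
    polarizationMap u t o + r • u ∈ oddFold u t S := by
  set p := polarizationMap u t o + r • u with hp
  have hball : p ∈ closedBall (polarizationMap u t o) r :=
    add_smul_mem_closedBall hu (abs_of_nonneg hr).le
  have hinner : ⟪p, u⟫ = t + |t - ⟪o, u⟫| + r := by
    rw [hp, inner_add_left, inner_polarizationMap hu, real_inner_smul_left,
      real_inner_self_eq_norm_sq, hu]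
    ring
  have hfar : ∀ x : E, R < |⟪x, u⟫ - ⟪o, u⟫| → x ∉ S := fun x hx hxS =>
    (hx.trans_le (abs_inner_sub_inner_le_dist hu x o)).not_ge (hSR hxS)
  refine ⟨by rw [hinner]; linarith [abs_nonneg (t - ⟪o, u⟫)], ?_⟩
  rcases le_total t ⟪o, u⟫ with ho | ho
  · rw [polarizationMap_of_le ho] at hball
    rw [abs_of_nonpos (sub_nonpos.2 ho)] at h hinner
    have hσp : hyperplaneReflection u t p ∉ S := hfar _ <| by
      rw [inner_hyperplaneReflection hu, hinner, lt_abs]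
      right
      linarith
    exact fun hiff => hσp (hiff.1 (hSr hball))
  · rw [polarizationMap_of_ge hu ho, mem_closedBall, ← dist_hyperplaneReflection_left hu] at hball
    rw [abs_of_nonneg (sub_nonneg.2 ho)] at h hinner
    have hpS : p ∉ S := hfar _ <| by
      rw [hinner, lt_abs]
      left
      linarith
    exact fun hiff => hpS (hiff.2 (hSr hball))

/-- A surrogate for the region where `Φ`, restricted to `closedBall c R`, has odd mapping degree:
it lies in the image, its frontier lies in the image of the boundary sphere, and it contains
the ball of radius `r` about `Φ c`. -/
structure IsOddDegreeRegion {X : Type*} [PseudoMetricSpace X] (Φ : X → X) (c : X) (r R : ℝ)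
    (S : Set X) : Prop where
  closedBall_subset : closedBall (Φ c) r ⊆ S
  subset_image : S ⊆ Φ '' closedBall c R
  frontier_subset : frontier S ⊆ Φ '' sphere c R

theorem isOddDegreeRegion_id {X : Type*} [PseudoMetricSpace X] {c : X} {r R : ℝ} (h : r ≤ R) :
    IsOddDegreeRegion id c r R (closedBall c R) where
  closedBall_subset := closedBall_subset_closedBall h
  subset_image := by rw [image_id]
  frontier_subset := by rw [image_id]; exact frontier_closedBall_subset_sphere

theorem IsOddDegreeRegion.polarizationMap_comp {Φ : E → E} (hS : IsOddDegreeRegion Φ c r R S)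
    (hu : ‖u‖ = 1) (hΦ : LipschitzWith 1 Φ) (hr : 0 ≤ r) (h : R < 2 * |t - ⟪Φ c, u⟫| + r)
    (hdisj : Disjoint (closedBall (polarizationMap u t (Φ c)) r)
      (polarizationMap u t ∘ Φ '' sphere c R)) :
    IsOddDegreeRegion (polarizationMap u t ∘ Φ) c r R (oddFold u t S) := by
  have hSR : S ⊆ closedBall (Φ c) R := hS.subset_image.trans <|
    image_subset_iff.2 fun x hx => by simpa using (hΦ.mapsTo_closedBall c R) hx
  have hfrontier : frontier (oddFold u t S) ⊆ polarizationMap u t ∘ Φ '' sphere c R := by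
    rw [image_comp]
    exact (frontier_oddFold_subset hu).trans (image_mono hS.frontier_subset)
  refine ⟨?_, ?_, hfrontier⟩
  · exact subset_of_isPreconnected_of_disjoint_frontier (convex_closedBall _ r).isPreconnected
      ⟨_, add_smul_mem_closedBall hu (abs_of_nonneg hr).le,
        add_smul_mem_oddFold hu hr hS.closedBall_subset hSR h⟩ (hdisj.mono_right hfrontier)
  · rw [image_comp]
    exact (oddFold_subset_image hu).trans (image_mono hS.subset_image)

/-! ### Rigidity of almost injective composites -/

theorem sub_lt_two_mul_abs_sub_inner (hu : ‖u‖ = 1) (hr : r ≤ R) (hR : R ≤ 2 * r)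
    (hinj : AlmostInjOn (R - r) (polarizationMap u t) (closedBall o r)) :
    R - r < 2 * |t - ⟪o, u⟫| := by
  by_contra! hle
  obtain ⟨p, hp, q, hq, hpq, hdist⟩ := exists_polarizationMap_eq_of_abs_add_le (r := r) hu
    (s := (R - r) / 2) (by linarith) (show |t - ⟪o, u⟫| + (R - r) / 2 ≤ r by linarith)
  have := hinj hp hq hpq
  linarith

theorem disjoint_closedBall_image_sphere {Φ : E → E} (hu : ‖u‖ = 1) (hr : r ≤ R)
    (hΦ : closedBall o r ⊆ Φ '' closedBall c r)
    (hinj : AlmostInjOn (R - r) (polarizationMap u t ∘ Φ) (closedBall c R)) :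
    Disjoint (closedBall (polarizationMap u t o) r) (polarizationMap u t ∘ Φ '' sphere c R) := by
  rw [disjoint_left]
  rintro _ hq ⟨y, hy, rfl⟩
  obtain ⟨_, hz', hzy⟩ := mem_image_polarizationMap_closedBall hu hq
    ((polarizationMap_eq_iff hu).1 rfl).1
  obtain ⟨z, hz, rfl⟩ := hΦ hz'
  have hyz : dist y z < R - r :=
    hinj (sphere_subset_closedBall hy) (closedBall_subset_closedBall hr hz) hzy.symm
  linarith [dist_triangle y z c, mem_sphere.1 hy, mem_closedBall.1 hz]

theorem exists_isometryEquiv_eqOn_polarizationMap_comp {Φ : E → E} {g : E ≃ᵢ E} (hu : ‖u‖ = 1)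
    (hr : r < R) (hR : R ≤ 2 * r) (hΦ : LipschitzWith 1 Φ) (hg : EqOn Φ g (closedBall c r))
    (hS : IsOddDegreeRegion Φ c r R S)
    (hinj : AlmostInjOn (R - r) (polarizationMap u t ∘ Φ) (closedBall c R)) :
    (∃ g' : E ≃ᵢ E, EqOn (polarizationMap u t ∘ Φ) g' (closedBall c r)) ∧
      IsOddDegreeRegion (polarizationMap u t ∘ Φ) c r R (oddFold u t S) := by
  have hr₀ : 0 ≤ r := by linarith
  have himage : Φ '' closedBall c r = closedBall (Φ c) r := by
    rw [hg.image_eq, g.image_closedBall, hg (mem_closedBall_self hr₀)]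
  have hinj' : AlmostInjOn (R - r) (polarizationMap u t) (closedBall (Φ c) r) := by
    rw [← himage]
    rintro _ ⟨y, hy, rfl⟩ _ ⟨z, hz, rfl⟩ hyz
    rw [hg hy, hg hz, g.dist_eq]
    exact hinj (closedBall_subset_closedBall hr.le hy) (closedBall_subset_closedBall hr.le hz) hyz
  have hS' := hS.polarizationMap_comp hu hΦ hr₀
    (by linarith [sub_lt_two_mul_abs_sub_inner hu hr.le hR hinj'])
    (disjoint_closedBall_image_sphere hu hr.le himage.ge hinj)
  obtain ⟨e, he⟩ := exists_isometryEquiv_eqOn_polarizationMap hu <|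
    le_abs_sub_inner_of_closedBall_subset hu hr₀
      (hS'.closedBall_subset.trans fun _ hq => hq.1)
  refine ⟨⟨g.trans e, fun x hx => ?_⟩, hS'⟩
  rw [Function.comp_apply, he (himage.le (mem_image_of_mem Φ hx)), hg hx, IsometryEquiv.trans_apply]

theorem IsPolarizationComposite.exists_isometryEquiv_eqOn {Φ : E → E}
    (hΦ : IsPolarizationComposite Φ) (hr : r < R) (hR : R ≤ 2 * r)
    (hinj : AlmostInjOn (R - r) Φ (closedBall c R)) :
    ∃ g : E ≃ᵢ E, EqOn Φ g (closedBall c r) := by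
  suffices (∃ g : E ≃ᵢ E, EqOn Φ g (closedBall c r)) ∧ ∃ S, IsOddDegreeRegion Φ c r R S from this.1
  induction hΦ with
  | id => exact ⟨⟨.refl E, fun _ _ => rfl⟩, _, isOddDegreeRegion_id hr.le⟩
  | comp hΦ hu t ih =>
    obtain ⟨⟨g, hg⟩, S, hS⟩ := ih hinj.of_comp
    obtain ⟨hg', hS'⟩ :=
      exists_isometryEquiv_eqOn_polarizationMap_comp hu hr hR hΦ.lipschitzWith hg hS hinj
    exact ⟨hg', _, hS'⟩

theorem isometry_domRestrict_closedBall_of_tendsto [ProperSpace E] {ι : Type*} {l : Filter ι}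
    [l.NeBot] {F : ι → E → E} {ψ : E → E} (hR : 0 < R)
    (hF : ∀ k, IsPolarizationComposite (F k))
    (hlim : ∀ x ∈ closedBall c R, Tendsto (F · x) l (𝓝 (ψ x)))
    (hinj : InjOn ψ (closedBall c R)) :
    Isometry ((closedBall c R).domRestrict ψ) := by
  have hequi : UniformEquicontinuous F :=
    LipschitzWith.uniformEquicontinuous F 1 fun k => (hF k).lipschitzWith
  have hball : EqOn (fun p : E × E => dist (ψ p.1) (ψ p.2)) (fun p => dist p.1 p.2)
      (ball c R ×ˢ ball c R) := by
    rintro ⟨x, y⟩ ⟨hx, hy⟩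
    obtain ⟨r, hmax, hr⟩ : ∃ r, max (R / 2) (max (dist x c) (dist y c)) < r ∧ r < R :=
      exists_between (max_lt (half_lt_self hR) (max_lt hx hy))
    obtain ⟨hRr, hxr, hyr⟩ : R / 2 < r ∧ dist x c < r ∧ dist y c < r := by
      simpa only [max_lt_iff] using hmax
    have hdist : ∀ᶠ k in l, dist (F k x) (F k y) = dist x y := by
      filter_upwards [eventually_almostInjOn hequi.equicontinuous hlim (isCompact_closedBall c R)
        hinj (sub_pos.2 hr)] with k hk
      obtain ⟨g, hg⟩ := (hF k).exists_isometryEquiv_eqOn hr (by linarith) hk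
      rw [hg hxr.le, hg hyr.le, g.dist_eq]
    exact tendsto_nhds_unique_of_eventuallyEq
      ((hlim x (ball_subset_closedBall hx)).dist (hlim y (ball_subset_closedBall hy)))
      tendsto_const_nhds hdist
  have hψ : ContinuousOn ψ (closedBall c R) := Filter.Tendsto.continuousOn_of_equicontinuousOn hlim
    (hequi.equicontinuous.equicontinuousOn _)
  have hψ₁ : ContinuousOn (fun p : E × E => ψ p.1) (closedBall c R ×ˢ closedBall c R) :=
    hψ.comp continuousOn_fst fun _ hp => hp.1
  have hψ₂ : ContinuousOn (fun p : E × E => ψ p.2) (closedBall c R ×ˢ closedBall c R) :=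
    hψ.comp continuousOn_snd fun _ hp => hp.2
  have hclosed : EqOn (fun p : E × E => dist (ψ p.1) (ψ p.2)) (fun p => dist p.1 p.2)
      (closedBall c R ×ˢ closedBall c R) :=
    hball.of_subset_closure (continuous_dist.comp_continuousOn (hψ₁.prodMk hψ₂))
      continuous_dist.continuousOn (prod_mono ball_subset_closedBall ball_subset_closedBall)
      (by rw [closure_prod_eq, closure_ball c hR.ne'])
  exact Isometry.of_dist_eq fun x y => hclosed (mk_mem_prod x.2 y.2)

theorem volume_image_of_isometry_domRestrict [FiniteDimensional ℝ E] [MeasurableSpace E]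
    [BorelSpace E] {f : E → E} {s : Set E} (hf : Isometry (s.domRestrict f)) :
    volume (f '' s) = volume s := by
  rw [← InnerProductSpace.euclideanHausdorffMeasure_eq_volume, ← range_domRestrict, ← image_univ,
    hf.euclideanHausdorffMeasure_image, ← isometry_subtype_coe.euclideanHausdorffMeasure_image,
    image_univ, Subtype.range_coe]

end Polarization

theorem stmt11_general {E : Type*} [NormedAddCommGroup E] [InnerProductSpace ℝ E]
    [FiniteDimensional ℝ E] [MeasurableSpace E] [BorelSpace E] {ι : Type*} {l : Filter ι}
    [l.NeBot] {c : E} {R : ℝ} (hR : 0 < R) {ψ : E → E} {F : ι → E → E}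
    (hF : ∀ k, IsPolarizationComposite (F k))
    (hlim : ∀ x ∈ closedBall c R, Tendsto (F · x) l (𝓝 (ψ x)))
    (hinj : InjOn ψ (closedBall c R)) :
    volume (ψ '' closedBall c R) = volume (closedBall c R) :=
  have := FiniteDimensional.proper ℝ E
  volume_image_of_isometry_domRestrict (isometry_domRestrict_closedBall_of_tendsto hR hF hlim hinj)

/-- Theorem 7.1: if a contraction `ψ : ℝⁿ → ℝⁿ` can be approximated pointwise on the unit
ball by finite compositions of contractions associated with polarizations, and `ψ` is
injective on the unit ball, then `ψ` preserves the volume of the unit ball. -/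
theorem stmt11 {n : ℕ} (hn : 2 ≤ n)
    (ψ : Euc n → Euc n) (hψ : LipschitzWith 1 ψ)
    (ψk : ℕ → Euc n → Euc n)
    (hcomp : ∀ k, ∃ l : List (Euc n → Euc n), l ≠ [] ∧
        (∀ f ∈ l, ∃ (u : Euc n) (t : ℝ), ‖u‖ = 1 ∧ f = polContr u t) ∧
        ψk k = l.foldr (· ∘ ·) id)
    (hconv : ∀ x ∈ closedBall (0 : Euc n) 1,
        Tendsto (fun k => ψk k x) atTop (𝓝 (ψ x)))
    (hinj : Set.InjOn ψ (closedBall (0 : Euc n) 1)) :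
    volume (ψ '' closedBall (0 : Euc n) 1) = volume (closedBall (0 : Euc n) 1) := by
  refine stmt11_general one_pos (fun k => ?_) hconv hinj
  obtain ⟨_, _, hl, hk⟩ := hcomp k
  exact hk ▸ isPolarizationComposite_foldr hl
end
end

section
/- Let n ≥ 2, let H be a hyperplane in ℝⁿ, and let ∂ ∈ 𝒥_H(𝓕ⁿₙ). Let 𝒥′ ⊂ 𝒥(𝓕ⁿₙ) be a family such that for each ♥ ∈ 𝒥′ the associated contraction ψ_{♥,r} (with ♥B(x,r) = B(ψ_{♥,r}(x), r) essentially) is independent of r > 0. If ∂ is weakly approximable on 𝓕ⁿₙ by maps in 𝒥′ (i.e., for each A ∈ 𝓕ⁿₙ there are maps in 𝒥′ whose images of A converge to ∂A in the L¹ sense of indicator functions), then there is a sequence (∂_k) of maps in 𝒥′ such that the associated contractions ψ_{∂_k} converge uniformly on the unit ball Bⁿ to the contraction ψ_∂ associated with ∂. -/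
open MeasureTheory Metric Filter Topology
open scoped RealInnerProductSpace

noncomputable section

/-- Membership in `𝓕ⁿₙ`, the family of (nonempty) finite unions of closed balls. -/
def isFUB {n : ℕ} (A : Set (Euc n)) : Prop :=
  ∃ l : List (Euc n × ℝ), l ≠ [] ∧ (∀ p ∈ l, 0 < p.2) ∧
    A = ⋃ p ∈ l, closedBall p.1 p.2

/-- Membership in `𝒥(𝓕ⁿₙ)`: maps from `𝓕ⁿₙ` to `𝓛ⁿ` that are monotonic, measure
preserving, and map balls to balls. -/
def inJFUB {n : ℕ} (W : Set (Euc n) → Set (Euc n)) : Prop :=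
  (∀ A : Set (Euc n), isFUB A → MeasurableSet (W A) ∧ volume (W A) ≠ ⊤) ∧
  (∀ A B : Set (Euc n), isFUB A → isFUB B → essSub A B → essSub (W A) (W B)) ∧
  (∀ A : Set (Euc n), isFUB A → volume (W A) = volume A) ∧
  (∀ A : Set (Euc n), isFUB A →
      (∃ (x : Euc n) (r : ℝ), 0 < r ∧ essEq A (closedBall x r)) →
      ∃ (x' : Euc n) (r' : ℝ), 0 < r' ∧ essEq (W A) (closedBall x' r'))

/-!
Fix a finite net of points `x`, put a cluster of probe points around each, and let `A` be the union
of balls of one tiny radius `r` about all the probes.  Distinct probes have distinct images under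
`ψ_∂`, so `∂A` is the union of the `r`-balls about these images, and any `W ∈ 𝒥′` with `WA` close
to `∂A` satisfies `|A ∩ B(x, R)| ≤ |WA ∩ WB(x, R)| ≈ |∂A ∩ B(ψ_W x, R)|`.  Hence, up to `O(r)` in
the radius, a ball about `ψ_W x` contains at least as many images of probes as the ball of the same
radius about `x` contains probes.

The scales are chosen so that only the right cluster can meet this count: each cluster is more
numerous than all later ones together, and each is so much smaller in diameter than the earlier
ones that a ball of its size contains at most one image from each of them.  So some probe near `x`
has its image near `ψ_W x`, and `ψ_W x` is close to `ψ_∂ x` because `ψ_∂` is a contraction.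

There are enough distinct images because `ψ_∂` takes infinitely many values near every point: if `∂`
respects `H`-cylinders, then `ψ_∂` moves points only along the normal `u` of `H`, and `n ≥ 2` leaves
a direction orthogonal to `u`.
-/

section Metric

variable {α β : Type*} [PseudoMetricSpace α] [PseudoMetricSpace β]

lemma exists_finset_forall_dist_lt_of_totallyBounded {s : Set α}
    (hs : TotallyBounded s) {ε : ℝ} (hε : 0 < ε) :
    ∃ t : Finset α, ∀ f g : α → β, LipschitzWith 1 f → LipschitzWith 1 g →
      (∀ x ∈ t, dist (f x) (g x) < ε) → ∀ x ∈ s, dist (f x) (g x) < 3 * ε := by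
  obtain ⟨t, ht, hst⟩ := totallyBounded_iff.1 hs ε hε
  refine ⟨ht.toFinset, fun f g hf hg hfg x hx => ?_⟩
  obtain ⟨p, hp, hxp⟩ := Set.mem_iUnion₂.1 (hst hx)
  calc dist (f x) (g x) ≤ dist (f x) (f p) + dist (f p) (g p) + dist (g p) (g x) :=
        dist_triangle4 ..
    _ < ε + ε + ε := by
        gcongr
        · exact (hf.dist_le_mul x p).trans_lt (by simpa using hxp)
        · exact hfg p (ht.mem_toFinset.2 hp)
        · exact (hg.dist_le_mul p x).trans_lt (by simpa [dist_comm] using hxp)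
    _ = 3 * ε := by ring

lemma pairwiseDisjoint_closedBall_of_lipschitzWith {f : α → β} {s : Set α} {r : ℝ}
    (hf : LipschitzWith 1 f) (h : s.PairwiseDisjoint fun x => closedBall (f x) r) :
    s.PairwiseDisjoint fun x => closedBall x r := by
  have hmaps (x : α) : Set.MapsTo f (closedBall x r) (closedBall (f x) r) := by
    simpa using hf.mapsTo_closedBall x r
  intro x hx y hy hxy
  exact Set.disjoint_left.2 fun z hzx hzy =>
    Set.disjoint_left.1 (h hx hy hxy) (hmaps x hzx) (hmaps y hzy)

lemma eventually_pairwiseDisjoint_closedBall {ι γ : Type*} [MetricSpace γ] {c : ι → γ}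
    {s : Finset ι} (hc : Set.InjOn c s) :
    ∀ᶠ r in 𝓝 (0 : ℝ), (s : Set ι).PairwiseDisjoint fun i => closedBall (c i) r := by
  suffices h : ∀ᶠ r in 𝓝 (0 : ℝ), ∀ i ∈ s, ∀ j ∈ s, i ≠ j → r + r < dist (c i) (c j) by
    filter_upwards [h] with r hr i hi j hj hij
    exact closedBall_disjoint_closedBall (hr i hi j hj hij)
  simp only [eventually_all_finset, eventually_all]
  intro i hi j hj hij
  have hdist : (0 : ℝ) + 0 < dist (c i) (c j) := by
    simpa using hc.ne hi hj hij
  exact (continuous_id.add continuous_id).continuousAt.eventually_lt continuousAt_const hdist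

lemma infinite_image_ball {E Y : Type*} [SeminormedAddCommGroup E] [NormedSpace ℝ E]
    [TopologicalSpace Y] [T1Space Y] {f : E → Y} (hf : Continuous f) {x : E}
    (hx : ∃ᶠ y in 𝓝 x, f y ≠ f x) {ε : ℝ} (hε : 0 < ε) : (f '' ball x ε).Infinite := by
  obtain ⟨y, hyx, hy⟩ := (hx.and_eventually (ball_mem_nhds x hε)).exists
  exact ((convex_ball x ε).isPreconnected.image f hf.continuousOn).infinite_of_nontrivial
    ⟨f y, Set.mem_image_of_mem f hy, f x, Set.mem_image_of_mem f (mem_ball_self hε), hyx⟩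

end Metric

section Probes

lemma exists_finset_injOn_disjoint_image {α β : Type*} {f : α → β} {s : Set α}
    (hs : (f '' s).Infinite) (T : Finset β) (m : ℕ) :
    ∃ C : Finset α, ↑C ⊆ s ∧ C.card = m ∧ Set.InjOn f C ∧ ∀ c ∈ C, f c ∉ T := by
  obtain ⟨s', hs', hbij⟩ := Set.exists_subset_bijOn (s ∩ f ⁻¹' (↑T)ᶜ) f
  have hinf : s'.Infinite := by
    refine Set.Infinite.of_image f ?_
    rw [hbij.image_eq, Set.image_inter_preimage, ← Set.sdiff_eq]
    exact hs.sdiff T.finite_toSet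
  obtain ⟨C, hCs', hCm⟩ := hinf.exists_subset_card_eq m
  exact ⟨C, fun c hc => (hs' (hCs' hc)).1, hCm, hbij.injOn.mono hCs',
    fun c hc => (hs' (hCs' hc)).2⟩

variable {α β : Type*} [PseudoMetricSpace α] [PseudoMetricSpace β] {f : α → β} {x : α} {K : ℕ}
  {ε : ℝ}

/-- The finite set `Q` detects at the point `x` that a candidate `z` is close to `f x`, with
tolerance `ε` and slack `K`: for some radii `R < R' < ε`, if there are, up to an error `K`, at
least as many images of points of `Q` in the `R'`-ball about `z` as points of `Q` in the `R`-ball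
about `x`, then these two collections have a point of `Q` in common. -/
def IsProbe (f : α → β) (Q : Finset α) (x : α) (K : ℕ) (ε : ℝ) : Prop :=
  ∃ R R' : ℝ, 0 < R ∧ R < R' ∧ R' < ε ∧ ∀ z : β,
    {q ∈ Q | dist q x ≤ R}.card ≤ {q ∈ Q | dist (f q) z ≤ R'}.card + K →
      ∃ q ∈ Q, dist q x ≤ R ∧ dist (f q) z ≤ R'

namespace IsProbe

variable {Q C : Finset α}

lemma mono {ε' : ℝ} (h : IsProbe f Q x K ε) (hε : ε ≤ ε') : IsProbe f Q x K ε' := by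
  obtain ⟨R, R', hR, hRR', hR'ε, hQ⟩ := h
  exact ⟨R, R', hR, hRR', hR'ε.trans_le hε, hQ⟩

lemma nonempty (h : IsProbe f Q x K ε) : Q.Nonempty := by
  obtain ⟨R, R', -, -, -, hQ⟩ := h
  by_contra! hempty
  simpa [hempty] using hQ (f x)

variable [DecidableEq α]

lemma union_of_card_lt (hε : 0 < ε) (hCx : ∀ c ∈ C, dist c x ≤ ε / 2)
    (hcard : Q.card + K < C.card) : IsProbe f (Q ∪ C) x K ε := by
  refine ⟨ε / 2, 3 * ε / 4, by positivity, by linarith, by linarith, fun z hz => ?_⟩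
  by_contra! hfar
  have hC : C ⊆ {q ∈ Q ∪ C | dist q x ≤ ε / 2} := fun c hc =>
    Finset.mem_filter.2 ⟨Finset.mem_union_right Q hc, hCx c hc⟩
  have hQ : {q ∈ Q ∪ C | dist (f q) z ≤ 3 * ε / 4} ⊆ Q := by
    intro q hq
    obtain ⟨hqQC, hqz⟩ := Finset.mem_filter.1 hq
    exact (Finset.mem_union.1 hqQC).resolve_right fun hqC => (hfar q hqQC (hCx q hqC)).not_ge hqz
  have := Finset.card_le_card hC
  have := Finset.card_le_card hQ
  omega

lemma union_of_pairwiseDisjoint (h : IsProbe f Q x (K + 1) ε)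
    (hC : (C : Set α).PairwiseDisjoint fun c => closedBall (f c) ε) :
    IsProbe f (Q ∪ C) x K ε := by
  obtain ⟨R, R', hR, hRR', hR'ε, hQ⟩ := h
  refine ⟨R, R', hR, hRR', hR'ε, fun z hz => ?_⟩
  have hone : {c ∈ C | dist (f c) z ≤ R'}.card ≤ 1 := by
    have hmem {c : α} (hc : dist (f c) z ≤ R') : z ∈ closedBall (f c) ε :=
      mem_closedBall'.2 (hc.trans hR'ε.le)
    simp only [Finset.card_le_one, Finset.mem_filter]
    rintro a ⟨ha, haz⟩ b ⟨hb, hbz⟩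
    exact hC.elim_set ha hb z (hmem haz) (hmem hbz)
  have hle : {q ∈ Q | dist q x ≤ R}.card ≤ {q ∈ Q | dist (f q) z ≤ R'}.card + (K + 1) :=
    calc {q ∈ Q | dist q x ≤ R}.card ≤ {q ∈ Q ∪ C | dist q x ≤ R}.card :=
          Finset.card_le_card (Finset.filter_subset_filter _ Finset.subset_union_left)
      _ ≤ {q ∈ Q ∪ C | dist (f q) z ≤ R'}.card + K := hz
      _ ≤ {q ∈ Q | dist (f q) z ≤ R'}.card + {c ∈ C | dist (f c) z ≤ R'}.card + K := by
          rw [Finset.filter_union]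
          gcongr
          exact Finset.card_union_le _ _
      _ ≤ {q ∈ Q | dist (f q) z ≤ R'}.card + (K + 1) := by omega
  obtain ⟨q, hq, hqxz⟩ := hQ z hle
  exact ⟨q, Finset.mem_union_left C hq, hqxz⟩

end IsProbe

/- The bound `N` must not depend on `ε`: in the induction step the cluster of the new point has to
outnumber the later clusters, whose scale is only chosen once that cluster is known. -/
lemma exists_isProbe {β : Type*} [MetricSpace β] {f : α → β}
    (hf : ∀ x, ∀ ε > 0, (f '' ball x ε).Infinite) (s : Finset α) (K : ℕ) :
    ∃ N : ℕ, ∀ ε > 0, ∀ T : Finset β, ∃ Q : Finset α, Q.card ≤ N ∧ Set.InjOn f Q ∧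
      (∀ q ∈ Q, f q ∉ T) ∧ ∀ x ∈ s, IsProbe f Q x K ε := by
  classical
  induction s using Finset.induction_on generalizing K with
  | empty => exact ⟨0, fun ε _ T => ⟨∅, by simp⟩⟩
  | insert x s _ ih =>
    obtain ⟨N, hN⟩ := ih (K + 1)
    refine ⟨N + (N + K + 1), fun ε hε T => ?_⟩
    obtain ⟨C, hCx, hCcard, hCinj, hCT⟩ :=
      exists_finset_injOn_disjoint_image (hf x (ε / 2) (half_pos hε)) T (N + K + 1)
    obtain ⟨δ, hδpos, hδε, hδ⟩ :=
      ((eventually_lt_nhds hε).and (eventually_pairwiseDisjoint_closedBall hCinj)).exists_gt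
    obtain ⟨Q, hQcard, hQinj, hQT, hQ⟩ := hN δ hδpos (T ∪ C.image f)
    have hQC : ∀ q ∈ Q, ∀ c ∈ C, f q ≠ f c := fun q hq c hc heq =>
      hQT q hq (Finset.mem_union_right T (heq ▸ Finset.mem_image_of_mem f hc))
    have hdisj : Disjoint (Q : Set α) C := Set.disjoint_left.2 fun q hq hc => hQC q hq q hc rfl
    refine ⟨Q ∪ C, ?_, ?_, ?_, ?_⟩
    · exact (Finset.card_union_le Q C).trans (by omega)
    · rw [Finset.coe_union, Set.injOn_union hdisj]
      exact ⟨hQinj, hCinj, hQC⟩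
    · exact Finset.forall_mem_union.2
        ⟨fun q hq hqT => hQT q hq (Finset.mem_union_left _ hqT), hCT⟩
    · refine (Finset.forall_mem_insert ..).2 ⟨?_, fun y hy => ?_⟩
      · exact IsProbe.union_of_card_lt hε (fun c hc => (hCx hc).le) (by omega)
      · exact ((hQ y hy).union_of_pairwiseDisjoint hδ).mono hδε.le

lemma IsProbe.eventually_dist_lt {Q : Finset α} (h : IsProbe f Q x 0 ε) (hf : LipschitzWith 1 f) :
    ∀ᶠ r in 𝓝 (0 : ℝ), ∀ z : β,
      (∀ R > 0, {q ∈ Q | dist q x ≤ R}.card ≤ {q ∈ Q | dist (f q) z ≤ R + 2 * r}.card) →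
        dist z (f x) < 2 * ε := by
  obtain ⟨R, R', hR, hRR', hR'ε, hQ⟩ := h
  filter_upwards [eventually_lt_nhds (show 0 < (R' - R) / 2 by linarith)] with r hr z hz
  have hcard : {q ∈ Q | dist q x ≤ R}.card ≤ {q ∈ Q | dist (f q) z ≤ R'}.card + 0 := by
    refine (hz R hR).trans (Finset.card_le_card (Finset.monotone_filter_right Q fun q _ hq => ?_))
    exact hq.trans (by linarith)
  obtain ⟨q, -, hqx, hqz⟩ := hQ z hcard
  calc dist z (f x) ≤ dist (f q) z + dist (f q) (f x) := dist_triangle_left ..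
    _ ≤ R' + R := add_le_add hqz ((hf.dist_le_mul q x).trans (by simpa using hqx))
    _ < 2 * ε := by linarith

end Probes

section UnionsOfBalls

variable {E ι : Type*} [NormedAddCommGroup E] [MeasurableSpace E] [BorelSpace E] (μ : Measure E)
  [μ.IsAddHaarMeasure] {Q : Finset ι} {c : ι → E} {r : ℝ}

lemma measure_biUnion_closedBall (hQ : (Q : Set ι).PairwiseDisjoint fun q => closedBall (c q) r) :
    μ (⋃ q ∈ Q, closedBall (c q) r) = Q.card * μ (closedBall 0 r) := by
  rw [measure_biUnion_finset hQ fun _ _ => measurableSet_closedBall]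
  simp [Measure.addHaar_closedBall_center μ (c _)]

lemma card_mul_le_measure_biUnion_closedBall_inter
    (hQ : (Q : Set ι).PairwiseDisjoint fun q => closedBall (c q) r) (z : E) (ρ : ℝ) :
    {q ∈ Q | dist (c q) z ≤ ρ}.card * μ (closedBall 0 r) ≤
      μ ((⋃ q ∈ Q, closedBall (c q) r) ∩ closedBall z (ρ + r)) := by
  rw [← measure_biUnion_closedBall μ (hQ.subset (Finset.filter_subset _ Q))]
  refine measure_mono (Set.iUnion₂_subset fun q hq => ?_)
  obtain ⟨hqQ, hqz⟩ := Finset.mem_filter.1 hq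
  exact Set.subset_inter (Set.subset_biUnion_of_mem (u := fun q => closedBall (c q) r) hqQ)
    (closedBall_subset_closedBall' (by linarith))

lemma measure_biUnion_closedBall_inter_le_card_mul (z : E) (ρ : ℝ) :
    μ ((⋃ q ∈ Q, closedBall (c q) r) ∩ closedBall z ρ) ≤
      {q ∈ Q | dist (c q) z ≤ ρ + r}.card * μ (closedBall 0 r) := by
  have hsub : (⋃ q ∈ Q, closedBall (c q) r) ∩ closedBall z ρ ⊆
      ⋃ q ∈ {q ∈ Q | dist (c q) z ≤ ρ + r}, closedBall (c q) r := by
    rintro y ⟨hy, hyz⟩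
    obtain ⟨q, hq, hyq⟩ := Set.mem_iUnion₂.1 hy
    refine Set.mem_biUnion (Finset.mem_filter.2 ⟨hq, ?_⟩) hyq
    linarith [dist_triangle_left (c q) z y, mem_closedBall.1 hyq, mem_closedBall.1 hyz]
  refine (measure_mono hsub).trans ((measure_biUnion_finset_le _ _).trans_eq ?_)
  simp [Measure.addHaar_closedBall_center μ (c _)]

end UnionsOfBalls

variable {n : ℕ} {A B : Set (Euc n)} {W : Set (Euc n) → Set (Euc n)} {ψ : Euc n → Euc n}

lemma essSub_iff_ae_le : essSub A B ↔ A ≤ᵐ[volume] B :=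
  ae_le_set.symm

lemma essEq_iff_ae_eq : essEq A B ↔ A =ᵐ[volume] B :=
  measure_symmDiff_eq_zero_iff

namespace isFUB

lemma closedBall (x : Euc n) {r : ℝ} (hr : 0 < r) : isFUB (closedBall x r) :=
  ⟨[(x, r)], by simp, by simpa using hr, by simp⟩

lemma biUnion_closedBall {Q : Finset (Euc n)} (hQ : Q.Nonempty) {r : ℝ} (hr : 0 < r) :
    isFUB (⋃ q ∈ Q, Metric.closedBall q r) :=
  ⟨Q.toList.map fun q => (q, r), by simpa using hQ.ne_empty, by simp [hr], by simp⟩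

lemma union (hA : isFUB A) (hB : isFUB B) : isFUB (A ∪ B) := by
  obtain ⟨l, hl, hlpos, rfl⟩ := hA
  obtain ⟨m, -, hmpos, rfl⟩ := hB
  refine ⟨l ++ m, by simp [hl], List.forall_mem_append.2 ⟨hlpos, hmpos⟩, ?_⟩
  simp only [List.mem_append, Set.iUnion_or, Set.iUnion_union_distrib]

lemma isCompact (hA : isFUB A) : IsCompact A := by
  obtain ⟨l, -, -, rfl⟩ := hA
  exact l.finite_toSet.isCompact_biUnion fun p _ => isCompact_closedBall p.1 p.2

end isFUB

/-- `ψ` is the map on centres induced by `W`: in the notation of the source, `ψ = ψ_{W,r}` for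
every `r > 0`. -/
def IsCenterMap (W : Set (Euc n) → Set (Euc n)) (ψ : Euc n → Euc n) : Prop :=
  ∀ (x : Euc n) (r : ℝ), 0 < r → essEq (W (closedBall x r)) (closedBall (ψ x) r)

/-- Weak approximability of `D` on `𝓕ⁿₙ` by maps in `𝓙'`; the approximating maps may depend on the
set `A`, and `‖1_{SₖA} − 1_{DA}‖_{L¹}` is the measure of a symmetric difference. -/
def WeaklyApproximable (D : Set (Euc n) → Set (Euc n)) (𝓙' : Set (Set (Euc n) → Set (Euc n))) :
    Prop :=
  ∀ A : Set (Euc n), isFUB A →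
    ∃ S : ℕ → Set (Euc n) → Set (Euc n), (∀ k, S k ∈ 𝓙') ∧
      Tendsto (fun k => volume (sd (S k A) (D A))) atTop (𝓝 0)

/-- `D` respects `H`-cylinders, where `H` is a hyperplane with normal `u`. -/
def RespectsCylinders (u : Euc n) (D : Set (Euc n) → Set (Euc n)) : Prop :=
  ∀ A : Set (Euc n), isFUB A → ∀ (c : Euc n) (ρ : ℝ), 0 < ρ →
    essSub A (cyl u c ρ) → essSub (D A) (cyl u c ρ)

namespace inJFUB

lemma map_ae_le_map (hW : inJFUB W) (hA : isFUB A) (hB : isFUB B) (hAB : A ⊆ B) :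
    W A ≤ᵐ[volume] W B :=
  essSub_iff_ae_le.1 (hW.2.1 A B hA hB (essSub_iff_ae_le.2 hAB.eventuallyLE))

lemma measure_inter_le (hW : inJFUB W) (hA : isFUB A) (hB : isFUB B) :
    volume (A ∩ B) ≤ volume (W A ∩ W B) := by
  obtain ⟨hmeas, -, hvol, -⟩ := id hW
  have hAB := hA.union hB
  have hunion : volume (W A ∪ W B) ≤ volume (A ∪ B) := by
    rw [← hvol _ hAB]
    refine (measure_mono_ae (ae_le_set_union (hW.map_ae_le_map hA hAB Set.subset_union_left)
      (hW.map_ae_le_map hB hAB Set.subset_union_right))).trans_eq ?_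
    rw [Set.union_self]
  refine (ENNReal.add_le_add_iff_left (hAB.isCompact.measure_ne_top (μ := volume))).1 ?_
  calc volume (A ∪ B) + volume (A ∩ B) = volume A + volume B :=
        measure_union_add_inter A hB.isCompact.measurableSet
    _ = volume (W A) + volume (W B) := by rw [hvol A hA, hvol B hB]
    _ = volume (W A ∪ W B) + volume (W A ∩ W B) :=
        (measure_union_add_inter (W A) (hmeas B hB).1).symm
    _ ≤ volume (A ∪ B) + volume (W A ∩ W B) := by gcongr

lemma map_biUnion_closedBall_ae_eq (hW : inJFUB W) (hψ : IsCenterMap W ψ)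
    (hψlip : LipschitzWith 1 ψ) {Q : Finset (Euc n)} (hQne : Q.Nonempty) {r : ℝ} (hr : 0 < r)
    (hQ : (Q : Set (Euc n)).PairwiseDisjoint fun q => closedBall (ψ q) r) :
    W (⋃ q ∈ Q, closedBall q r) =ᵐ[volume] (⋃ q ∈ Q, closedBall (ψ q) r : Set (Euc n)) := by
  obtain ⟨hmeas, -, hvol, -⟩ := id hW
  have hA := isFUB.biUnion_closedBall hQne hr
  have hsub : (⋃ q ∈ Q, closedBall (ψ q) r : Set (Euc n)) ≤ᵐ[volume]
      W (⋃ q ∈ Q, closedBall q r) := by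
    rw [ae_le_set]
    simp only [Set.iUnion_sdiff]
    refine (measure_biUnion_null_iff Q.countable_toSet).2 fun q hq => ?_
    refine ae_le_set.1 ((essEq_iff_ae_eq.1 (hψ q r hr)).symm.le.trans ?_)
    exact hW.map_ae_le_map (isFUB.closedBall q hr) hA
      (Set.subset_biUnion_of_mem (u := fun q => closedBall q r) hq)
  have hvol_eq : volume (W (⋃ q ∈ Q, closedBall q r)) =
      volume (⋃ q ∈ Q, closedBall (ψ q) r : Set (Euc n)) := by
    rw [hvol _ hA, measure_biUnion_closedBall volume hQ,
      measure_biUnion_closedBall volume (pairwiseDisjoint_closedBall_of_lipschitzWith hψlip hQ)]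
  exact (ae_eq_of_ae_subset_of_measure_ge hsub hvol_eq.le
    (Q.measurableSet_biUnion fun _ _ => measurableSet_closedBall).nullMeasurableSet
    (hmeas _ hA).2).symm

lemma card_filter_le (hW : inJFUB W) (hψ : IsCenterMap W ψ) {Q : Finset (Euc n)}
    (hQne : Q.Nonempty) {r : ℝ} (hr : 0 < r)
    (hQ : (Q : Set (Euc n)).PairwiseDisjoint fun q => closedBall q r) {c : Euc n → Euc n}
    (hvol : volume (W (⋃ q ∈ Q, closedBall q r) \ ⋃ q ∈ Q, closedBall (c q) r) <
      volume (closedBall (0 : Euc n) r)) (x : Euc n) {R : ℝ} (hR : 0 < R) :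
    {q ∈ Q | dist q x ≤ R}.card ≤ {q ∈ Q | dist (c q) (ψ x) ≤ R + 2 * r}.card := by
  set A : Set (Euc n) := ⋃ q ∈ Q, closedBall q r
  set U : Set (Euc n) := ⋃ q ∈ Q, closedBall (c q) r
  set ω := volume (closedBall (0 : Euc n) r)
  have hω : ω ≠ ⊤ := measure_closedBall_lt_top.ne
  have hRr : 0 < R + r := add_pos hR hr
  have hlt : {q ∈ Q | dist q x ≤ R}.card * ω <
      ({q ∈ Q | dist (c q) (ψ x) ≤ R + 2 * r}.card + 1) * ω :=
    calc {q ∈ Q | dist q x ≤ R}.card * ω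
      _ ≤ volume (A ∩ closedBall x (R + r)) :=
          card_mul_le_measure_biUnion_closedBall_inter volume hQ x R
      _ ≤ volume (W A ∩ W (closedBall x (R + r))) :=
          hW.measure_inter_le (.biUnion_closedBall hQne hr) (.closedBall x hRr)
      _ = volume (W A ∩ closedBall (ψ x) (R + r)) :=
          measure_congr (ae_eq_set_inter .rfl (essEq_iff_ae_eq.1 (hψ x _ hRr)))
      _ ≤ volume (U ∩ closedBall (ψ x) (R + r)) + volume (W A \ U) := by
          refine (measure_mono fun y hy => ?_).trans (measure_union_le _ _)
          exact (em (y ∈ U)).imp (fun hyU => ⟨hyU, hy.2⟩) fun hyU => ⟨hy.1, hyU⟩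
      _ ≤ {q ∈ Q | dist (c q) (ψ x) ≤ R + r + r}.card * ω + volume (W A \ U) := by
          gcongr
          exact measure_biUnion_closedBall_inter_le_card_mul volume (ψ x) (R + r)
      _ < {q ∈ Q | dist (c q) (ψ x) ≤ R + r + r}.card * ω + ω :=
          ENNReal.add_lt_add_left (ENNReal.mul_ne_top (ENNReal.natCast_ne_top _) hω) hvol
      _ = ({q ∈ Q | dist (c q) (ψ x) ≤ R + 2 * r}.card + 1) * ω := by
          rw [add_one_mul, add_assoc R, two_mul]
  exact Nat.lt_succ_iff.1 (by exact_mod_cast lt_of_mul_lt_mul_right' hlt)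

end inJFUB

section Approximation

variable {D : Set (Euc n) → Set (Euc n)} {ψD : Euc n → Euc n}
  {𝓙' : Set (Set (Euc n) → Set (Euc n))}

lemma WeaklyApproximable.exists_measure_diff_lt (hweak : WeaklyApproximable D 𝓙') (hA : isFUB A)
    {ω : ENNReal} (hω : 0 < ω) : ∃ W ∈ 𝓙', volume (W A \ D A) < ω := by
  obtain ⟨S, hS, hlim⟩ := hweak A hA
  obtain ⟨k, hk⟩ := (hlim.eventually_lt_const hω).exists
  exact ⟨S k, hS k, (measure_mono Set.subset_union_left).trans_lt hk⟩

lemma exists_forall_mem_finset_dist_lt (hD : inJFUB D) (hψD : IsCenterMap D ψD)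
    (hψDlip : LipschitzWith 1 ψD) (hψDne : ∀ x, ∃ᶠ y in 𝓝 x, ψD y ≠ ψD x)
    (h𝓙' : ∀ W ∈ 𝓙', inJFUB W) (hweak : WeaklyApproximable D 𝓙') {s : Finset (Euc n)}
    (hs : s.Nonempty) {ε : ℝ} (hε : 0 < ε) :
    ∃ W ∈ 𝓙', ∀ ψ, IsCenterMap W ψ → ∀ x ∈ s, dist (ψ x) (ψD x) < ε := by
  obtain ⟨N, hN⟩ := exists_isProbe
    (fun x ε hε => infinite_image_ball hψDlip.continuous (hψDne x) hε) s 0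
  obtain ⟨Q, -, hQinj, -, hprobe⟩ := hN (ε / 2) (half_pos hε) ∅
  obtain ⟨x₀, hx₀⟩ := hs
  have hQne : Q.Nonempty := (hprobe x₀ hx₀).nonempty
  obtain ⟨r, hr, hdisj, hdist⟩ :=
    ((eventually_pairwiseDisjoint_closedBall hQinj).and ((eventually_all_finset s).2
      fun x hx => (hprobe x hx).eventually_dist_lt hψDlip)).exists_gt
  obtain ⟨W, hW, hWD⟩ := hweak.exists_measure_diff_lt (.biUnion_closedBall hQne hr)
    (measure_closedBall_pos volume (0 : Euc n) hr)
  have hWU : volume (W (⋃ q ∈ Q, closedBall q r) \ ⋃ q ∈ Q, closedBall (ψD q) r) <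
      volume (closedBall (0 : Euc n) r) :=
    (measure_congr (ae_eq_set_sdiff .rfl
      (hD.map_biUnion_closedBall_ae_eq hψD hψDlip hQne hr hdisj))).symm.trans_lt hWD
  refine ⟨W, hW, fun ψ hψ x hx => ?_⟩
  have hclose := hdist x hx (ψ x) fun R hR => (h𝓙' W hW).card_filter_le hψ hQne hr
    (pairwiseDisjoint_closedBall_of_lipschitzWith hψDlip hdisj) hWU x hR
  linarith

lemma exists_forall_mem_dist_lt (hD : inJFUB D) (hψD : IsCenterMap D ψD)
    (hψDlip : LipschitzWith 1 ψD) (hψDne : ∀ x, ∃ᶠ y in 𝓝 x, ψD y ≠ ψD x)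
    (h𝓙' : ∀ W ∈ 𝓙', inJFUB W) (hweak : WeaklyApproximable D 𝓙') {K : Set (Euc n)}
    (hK : TotallyBounded K) {ε : ℝ} (hε : 0 < ε) :
    ∃ W ∈ 𝓙', ∀ ψ, LipschitzWith 1 ψ → IsCenterMap W ψ → ∀ x ∈ K, dist (ψ x) (ψD x) < ε := by
  classical
  obtain ⟨t, ht⟩ := exists_finset_forall_dist_lt_of_totallyBounded (β := Euc n) hK
    (div_pos hε three_pos)
  obtain ⟨W, hW, hWt⟩ := exists_forall_mem_finset_dist_lt hD hψD hψDlip hψDne h𝓙' hweak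
    (Finset.insert_nonempty 0 t) (div_pos hε three_pos)
  refine ⟨W, hW, fun ψ hψlip hψ x hx => ?_⟩
  have hclose := ht ψ ψD hψlip hψDlip
    (fun p hp => hWt ψ hψ p (Finset.mem_insert_of_mem hp)) x hx
  linarith

end Approximation

section Cylinders

variable {u : Euc n}

lemma cyl_eq_norm_starProjection_le (hu : ‖u‖ = 1) (c : Euc n) (ρ : ℝ) :
    cyl u c ρ = {y | ‖(ℝ ∙ u)ᗮ.starProjection (y - c)‖ ≤ ρ} := by
  simp only [cyl, Submodule.starProjection_orthogonal_val,
    Submodule.starProjection_unit_singleton ℝ hu, real_inner_comm]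

lemma RespectsCylinders.starProjection_eq {D : Set (Euc n) → Set (Euc n)} (hu : ‖u‖ = 1)
    (hD : RespectsCylinders u D) (hψ : IsCenterMap D ψ) (x : Euc n) :
    (ℝ ∙ u)ᗮ.starProjection (ψ x) = (ℝ ∙ u)ᗮ.starProjection x := by
  have hle : ∀ r > 0, ‖(ℝ ∙ u)ᗮ.starProjection (ψ x - x)‖ ≤ r := by
    intro r hr
    have hcyl := cyl_eq_norm_starProjection_le hu x r
    have hclosed : IsClosed (cyl u x r) := by
      rw [hcyl]
      exact isClosed_le (by fun_prop) continuous_const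
    have hsub : closedBall x r ⊆ cyl u x r := by
      rw [hcyl]
      exact fun y hy => (Submodule.norm_starProjection_apply_le _ _).trans
        (mem_closedBall_iff_norm.1 hy)
    have hDsub : D (closedBall x r) ≤ᵐ[volume] cyl u x r := essSub_iff_ae_le.1
      (hD _ (.closedBall x hr) x r hr (essSub_iff_ae_le.2 hsub.eventuallyLE))
    have hball : ball (ψ x) r ≤ᵐ[volume] cyl u x r :=
      ball_subset_closedBall.eventuallyLE.trans
        ((essEq_iff_ae_eq.1 (hψ x r hr)).symm.le.trans hDsub)
    have hempty : ball (ψ x) r \ cyl u x r = ∅ :=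
      (isOpen_ball.sdiff hclosed).eq_empty_of_measure_zero (ae_le_set.1 hball)
    have hmem := Set.sdiff_eq_empty.1 hempty (mem_ball_self hr)
    rwa [hcyl] at hmem
  have hzero : ‖(ℝ ∙ u)ᗮ.starProjection (ψ x - x)‖ ≤ 0 :=
    le_of_forall_pos_le_add fun r hr => by simpa using hle r hr
  rw [map_sub] at hzero
  exact sub_eq_zero.1 (norm_le_zero_iff.1 hzero)

lemma frequently_ne_of_starProjection_eq (hn : 2 ≤ n)
    (hψ : ∀ x, (ℝ ∙ u)ᗮ.starProjection (ψ x) = (ℝ ∙ u)ᗮ.starProjection x) (x : Euc n) :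
    ∃ᶠ y in 𝓝 x, ψ y ≠ ψ x := by
  have hbot : (ℝ ∙ u)ᗮ ≠ ⊥ := by
    rw [Ne, Submodule.orthogonal_eq_bot_iff]
    intro htop
    have hfinrank := finrank_span_le_card (R := ℝ) ({u} : Set (Euc n))
    rw [htop, finrank_top, finrank_euclideanSpace_fin, Set.toFinset_singleton,
      Finset.card_singleton] at hfinrank
    omega
  obtain ⟨v, hv, hv0⟩ := Submodule.exists_mem_ne_zero_of_ne_bot hbot
  have hlim : Tendsto (fun s : ℝ => x + s • v) (𝓝[≠] 0) (𝓝 x) :=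
    ((by fun_prop : Continuous fun s : ℝ => x + s • v).tendsto' 0 x (by simp)).mono_left
      nhdsWithin_le_nhds
  refine hlim.frequently (Eventually.frequently ?_)
  filter_upwards [self_mem_nhdsWithin] with s hs heq
  have hproj := congrArg (ℝ ∙ u)ᗮ.starProjection heq
  rw [hψ, hψ, map_add, map_smul, Submodule.starProjection_eq_self_iff.2 hv] at hproj
  exact smul_ne_zero hs hv0 (by simpa using hproj)

end Cylinders

theorem stmt14_general {D : Set (Euc n) → Set (Euc n)} (hD : inJFUB D) {ψD : Euc n → Euc n}
    (hψDlip : LipschitzWith 1 ψD) (hψD : IsCenterMap D ψD)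
    (hψDne : ∀ x, ∃ᶠ y in 𝓝 x, ψD y ≠ ψD x) {𝓙' : Set (Set (Euc n) → Set (Euc n))}
    (h𝓙'J : ∀ W ∈ 𝓙', inJFUB W)
    (h𝓙'contr : ∀ W ∈ 𝓙', ∃ ψ : Euc n → Euc n, LipschitzWith 1 ψ ∧ IsCenterMap W ψ)
    (hweak : WeaklyApproximable D 𝓙') :
    ∃ Dk : ℕ → Set (Euc n) → Set (Euc n), (∀ k, Dk k ∈ 𝓙') ∧
      ∃ ψk : ℕ → Euc n → Euc n, (∀ k, LipschitzWith 1 (ψk k) ∧ IsCenterMap (Dk k) (ψk k)) ∧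
        TendstoLocallyUniformly ψk ψD atTop := by
  choose Dk hDk hclose using fun k : ℕ =>
    exists_forall_mem_dist_lt hD hψD hψDlip hψDne h𝓙'J hweak
      (isCompact_closedBall (0 : Euc n) k).totallyBounded (Nat.one_div_pos_of_nat (n := k))
  choose ψk hψk using fun k => h𝓙'contr (Dk k) (hDk k)
  refine ⟨Dk, hDk, ψk, hψk, tendstoLocallyUniformly_iff_forall_isCompact.2 fun K hK => ?_⟩
  obtain ⟨ρ, hρ⟩ := hK.isBounded.subset_closedBall 0
  refine Metric.tendstoUniformlyOn_iff.2 fun ε hε => ?_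
  filter_upwards [tendsto_natCast_atTop_atTop.eventually_ge_atTop ρ,
    tendsto_one_div_add_atTop_nhds_zero_nat.eventually_lt_const hε] with k hρk hkε x hx
  rw [dist_comm]
  exact (hclose k (ψk k) (hψk k).1 (hψk k).2 x (closedBall_subset_closedBall hρk (hρ hx))).trans hkε

/-- Theorem 7.5: if `∂ ∈ 𝒥_H(𝓕ⁿₙ)` is weakly approximable on `𝓕ⁿₙ` by maps in a family
`𝒥′ ⊂ 𝒥(𝓕ⁿₙ)` whose members have `r`-independent associated contractions, then there is a
sequence of maps in `𝒥′` whose associated contractions converge uniformly on the unit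
ball to the contraction `ψ_∂` associated with `∂`. -/
theorem stmt14 {n : ℕ} (hn : 2 ≤ n) (u : Euc n) (hu : ‖u‖ = 1) (t₀ : ℝ)
    (D : Set (Euc n) → Set (Euc n)) (hD : inJFUB D)
    (hDcyl : ∀ A : Set (Euc n), isFUB A → ∀ (c : Euc n) (ρ : ℝ), 0 < ρ →
        essSub A (cyl u c ρ) → essSub (D A) (cyl u c ρ))
    (ψD : Euc n → Euc n) (hψDlip : LipschitzWith 1 ψD)
    (hψD : ∀ (x : Euc n) (r : ℝ), 0 < r →
        essEq (D (closedBall x r)) (closedBall (ψD x) r))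
    (𝓙' : Set (Set (Euc n) → Set (Euc n)))
    (h𝓙'J : ∀ W ∈ 𝓙', inJFUB W)
    (h𝓙'contr : ∀ W ∈ 𝓙', ∃ ψ : Euc n → Euc n, LipschitzWith 1 ψ ∧
        ∀ (x : Euc n) (r : ℝ), 0 < r → essEq (W (closedBall x r)) (closedBall (ψ x) r))
    (hweak : ∀ A : Set (Euc n), isFUB A →
        ∃ S : ℕ → Set (Euc n) → Set (Euc n), (∀ k, S k ∈ 𝓙') ∧
          Tendsto (fun k => volume (sd (S k A) (D A))) atTop (𝓝 0)) :
    ∃ Dk : ℕ → Set (Euc n) → Set (Euc n), (∀ k, Dk k ∈ 𝓙') ∧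
      ∃ ψk : ℕ → Euc n → Euc n,
        (∀ k, LipschitzWith 1 (ψk k) ∧
          ∀ (x : Euc n) (r : ℝ), 0 < r →
            essEq (Dk k (closedBall x r)) (closedBall (ψk k x) r)) ∧
        TendstoUniformlyOn (fun k => ψk k) ψD atTop (closedBall (0 : Euc n) 1) := by
  obtain ⟨Dk, hDk, ψk, hψk, hlim⟩ := stmt14_general hD hψDlip hψD
    (frequently_ne_of_starProjection_eq hn (RespectsCylinders.starProjection_eq hu hDcyl hψD))
    h𝓙'J h𝓙'contr hweak
  exact ⟨Dk, hDk, ψk, hψk,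
    tendstoLocallyUniformly_iff_forall_isCompact.1 hlim _ (isCompact_closedBall 0 1)⟩
end
end
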